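/- Let q be an odd prime power and fix signs ε1, ε2 ∈ {1, −1}. For each monic irreducible P ∈ F_q[X], let A_P denote the limit as M → ∞ of ∏_{Q monic irreducible, deg Q ≤ M} (1 + δ_P(Q)). Then there is a constant C, depending only on q, such that for all integers n ≥ 1 and M ≥ 1: the absolute value of [ (the sum of A_P over all monic irreducible P ∈ F_q[X] of degree n) minus π_q(n)·(1 − 1/q) ] is at most C·( q^{n − 2M}/n + q^{n/2}·M^3/n + q^n/(n·M·q^{M/2}) ). -/

import Mathlib

open Polynomial Classical

noncomputable section

/-- Quadratic residue symbol modulo `P`: 1 if `F` is a nonzero square mod `P`,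
-1 if a nonsquare, 0 if `P ∣ F`. -/
def chiP {Fq : Type*} [Field Fq] (P F : Fq[X]) : ℤ :=
  if P ∣ F then 0 else if ∃ G, P ∣ (F - G ^ 2) then 1 else -1

/-- `a_Q = (ε1^{deg Q} + ε2^{deg Q})·χ_P(Q)`. -/
def aQ {Fq : Type*} [Field Fq] (e1 e2 : ℤ) (P Q : Fq[X]) : ℤ :=
  (e1 ^ Q.natDegree + e2 ^ Q.natDegree) * chiP P Q

/-- `δ_P(Q) = a_Q·q^{-deg Q} - (1 + a_Q)·q^{-2·deg Q}`. -/
def deltaP {Fq : Type*} [Field Fq] (q : ℕ) (e1 e2 : ℤ) (P Q : Fq[X]) : ℝ :=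
  (aQ e1 e2 P Q : ℝ) * ((q : ℝ) ^ Q.natDegree)⁻¹ -
    (1 + (aQ e1 e2 P Q : ℝ)) * ((q : ℝ) ^ (2 * Q.natDegree))⁻¹

/-- `π_q(n)`: the number of monic irreducible polynomials of degree `n` over `F_q`. -/
def piq (Fq : Type*) [Field Fq] (n : ℕ) : ℕ :=
  {P : Fq[X] | P.Monic ∧ Irreducible P ∧ P.natDegree = n}.ncard

end

open Polynomial Classical

theorem stp_hasse_XQ {K : Type*} [Field K] [Fintype K] (k : ℕ) (hk : k < Fintype.card K) (h : K[X]) :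
    hasseDeriv k (X ^ Fintype.card K * h) = X ^ Fintype.card K * hasseDeriv k h := by
  obtain ⟨p, hp, n, hpp, hc⟩ := FiniteField.card' K
  rw [hasseDeriv_mul, Finset.sum_eq_single (0, k)]
  · simp
  · rintro ⟨a, b⟩ hab hne
    rw [Finset.HasAntidiagonal.mem_antidiagonal] at hab
    simp only at hab
    have ha : a ≠ 0 := by
      rintro rfl
      apply hne
      simp only [zero_add] at hab
      rw [hab]
    have : hasseDeriv a (X ^ Fintype.card K : K[X]) = 0 := by
      rw [← monomial_one_right_eq_X_pow, hasseDeriv_monomial]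
      have h1 : ((Fintype.card K).choose a : K) = 0 := by
        rw [CharP.cast_eq_zero_iff K p, hc]
        apply hpp.dvd_choose_pow ha
        rw [← hc]; omega
      rw [h1]; simp
    simp only [this, zero_mul]
  · intro h; simp at h

theorem stp_hasse_XQj {K : Type*} [Field K] [Fintype K] (k : ℕ) (hk : k < Fintype.card K) (j : ℕ) (h : K[X]) :
    hasseDeriv k (X ^ (j * Fintype.card K) * h) = X ^ (j * Fintype.card K) * hasseDeriv k h := by
  induction j generalizing h with
  | zero => simp
  | succ j ih =>
    have : (X : K[X]) ^ ((j+1) * Fintype.card K) = X ^ (j * Fintype.card K) * X ^ Fintype.card K := by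
      rw [← pow_add]; ring_nf
    rw [this, mul_assoc, ih, stp_hasse_XQ k hk, mul_assoc]

theorem stp_dvd_hasse_pow {K : Type*} [Field K] (f : K[X]) (N : ℕ) :
    ∀ i, f ^ (N - i) ∣ hasseDeriv i (f ^ N) := by
  induction N with
  | zero => intro i; simp
  | succ N ih =>
    intro i
    rw [pow_succ f N, hasseDeriv_mul]
    apply Finset.dvd_sum
    rintro ⟨a, b⟩ hab
    rw [Finset.HasAntidiagonal.mem_antidiagonal] at hab
    simp only at hab ⊢
    rcases Nat.eq_zero_or_pos b with rfl | hb
    · rw [hasseDeriv_zero']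
      refine dvd_trans (pow_dvd_pow f (?_ : _ ≤ (N - a) + 1)) ?_
      · omega
      · rw [pow_succ]; exact mul_dvd_mul_right (ih a) f
    · refine dvd_mul_of_dvd_left (dvd_trans (pow_dvd_pow f ?_) (ih a)) _
      omega

theorem stp_exists_T {K : Type*} [Field K] (f : K[X]) (hf : f ≠ 0) (N k : ℕ) (hk : k ≤ N) :
    ∃ T : K[X] →ₗ[K] K[X], (∀ r, hasseDeriv k (f ^ N * r) = f ^ (N - k) * T r) ∧
      ∀ r, (T r).natDegree ≤ r.natDegree + k * f.natDegree := by
  have h1 : ∀ r : K[X], ∃ t, hasseDeriv k (f ^ N * r) = f ^ (N - k) * t := by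
    intro r
    change f ^ (N - k) ∣ _
    rw [hasseDeriv_mul]
    apply Finset.dvd_sum
    rintro ⟨a, b⟩ hab
    rw [Finset.HasAntidiagonal.mem_antidiagonal] at hab
    simp only at hab ⊢
    refine dvd_mul_of_dvd_left (dvd_trans (pow_dvd_pow f ?_) (stp_dvd_hasse_pow f N a)) _
    omega
  choose T hT using h1
  have hne : f ^ (N - k) ≠ 0 := pow_ne_zero _ hf
  refine ⟨{ toFun := T, map_add' := ?_, map_smul' := ?_ }, hT, ?_⟩
  · intro x y
    apply mul_left_cancel₀ hne
    rw [← hT, mul_add, map_add, mul_add, ← hT, ← hT]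
  · intro c x
    apply mul_left_cancel₀ hne
    rw [← hT, mul_smul_comm, map_smul, hT]; simp
  · intro r
    change (T r).natDegree ≤ _
    by_cases h0 : T r = 0
    · rw [h0]; simp
    have h2 := congrArg natDegree (hT r)
    rw [natDegree_mul hne h0, natDegree_pow] at h2
    have h3 := natDegree_hasseDeriv_le (f ^ N * r) k
    have h4 : (f ^ N * r).natDegree ≤ N * f.natDegree + r.natDegree := by
      refine natDegree_mul_le.trans ?_
      rw [natDegree_pow]
    obtain ⟨d, rfl⟩ := Nat.exists_eq_add_of_le hk
    have : k + d - k = d := by omega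
    rw [this] at h2
    have h5 : (k + d) * f.natDegree = k * f.natDegree + d * f.natDegree := by ring
    omega

theorem stp_descent {K : Type*} [Field K] (f : K[X]) (hf : Squarefree f) (hm : 1 ≤ f.natDegree)
    (a : K) (ha : a ≠ 0) (n : ℕ) : ∀ r s : K[X], r.natDegree ≤ n → r ^ 2 * f = C a * s ^ 2 → r = 0 := by
  have hf0 : f ≠ 0 := by rintro rfl; simp at hm
  have hu : IsUnit (C a) := by simpa using ha
  induction n using Nat.strong_induction_on with
  | _ n ih =>
    intro r s hr h
    by_contra hr0
    have h1 : f ∣ s := by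
      rw [← hf.dvd_pow_iff_dvd (two_ne_zero)]
      have : f ∣ C a * s ^ 2 := ⟨r ^ 2, by rw [← h]; ring⟩
      exact (hu.dvd_mul_left).1 this
    obtain ⟨s', rfl⟩ := h1
    have h2 : r ^ 2 = C a * (f * s' ^ 2) := by
      apply mul_right_cancel₀ hf0
      rw [h]; ring
    have h3 : f ∣ r := by
      rw [← hf.dvd_pow_iff_dvd (two_ne_zero), h2]
      exact ⟨C a * s' ^ 2, by ring⟩
    obtain ⟨r', rfl⟩ := h3
    have h4 : r' ^ 2 * f = C a * s' ^ 2 := by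
      apply mul_left_cancel₀ hf0
      calc f * (r' ^ 2 * f) = (f * r') ^ 2 := by ring
        _ = _ := by rw [h2]; ring
    have hr' : r' ≠ 0 := by rintro rfl; simp at hr0
    rw [natDegree_mul hf0 hr'] at hr
    exact hr' (ih r'.natDegree (by omega) r' s' le_rfl h4)

theorem stp_core {K : Type*} [Field K] [Fintype K] (hodd : Odd (Fintype.card K)) (f : K[X]) (hf : Squarefree f)
    (hm : 1 ≤ f.natDegree) (B : ℕ) (hB : 2 * B + f.natDegree ≤ Fintype.card K) (r s : K[X])
    (hr : r.degree < B) (hs : s.degree < B)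
    (h : X ^ Fintype.card K ∣ r + s * f ^ ((Fintype.card K - 1) / 2)) : r = 0 ∧ s = 0 := by
  have hf0 : f ≠ 0 := by rintro rfl; simp at hm
  set Q := Fintype.card K with hQ
  obtain ⟨c, hc⟩ := hodd
  have hc' : (Q - 1) / 2 = c := by omega
  rw [hc'] at h
  have key : X ^ Q ∣ r ^ 2 * f - C (f.coeff 0) * s ^ 2 := by
    have e1 : X ^ Q ∣ f ^ Q - C (f.coeff 0) := by
      rw [hQ, ← FiniteField.expand_card f]
      have h1 : (X : K[X]) ∣ f - C (f.coeff 0) := by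
        rw [X_dvd_iff]; simp
      obtain ⟨w, hw⟩ := h1
      have := congrArg (expand K (Fintype.card K)) hw
      rw [map_sub, map_mul, expand_X, expand_C] at this
      exact ⟨_, this⟩
    have e2 : r ^ 2 * f - C (f.coeff 0) * s ^ 2 =
        (r + s * f ^ c) * ((r - s * f ^ c) * f) + (f ^ Q - C (f.coeff 0)) * s ^ 2 := by
      rw [hc]; ring
    rw [e2]
    exact dvd_add (dvd_mul_of_dvd_left h _) (dvd_mul_of_dvd_left e1 _)
  have hB0 : ∀ t : K[X], t.degree < B → t ≠ 0 → t.natDegree < B := by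
    intro t ht h0
    exact (natDegree_lt_iff_degree_lt h0).2 ht
  have zero : r ^ 2 * f - C (f.coeff 0) * s ^ 2 = 0 := by
    by_contra hne
    have h1 := natDegree_le_of_dvd key hne
    rw [natDegree_X_pow] at h1
    have h2 : (r ^ 2 * f - C (f.coeff 0) * s ^ 2).natDegree < Q := by
      refine lt_of_le_of_lt (natDegree_sub_le _ _) (max_lt ?_ ?_)
      · by_cases h0 : r = 0
        · simp [h0]; omega
        · rw [natDegree_mul (pow_ne_zero _ h0) hf0, natDegree_pow]
          have := hB0 r hr h0
          omega
      · refine lt_of_le_of_lt (natDegree_C_mul_le _ _) ?_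
        by_cases h0 : s = 0
        · simp [h0]; omega
        · rw [natDegree_pow]
          have := hB0 s hs h0
          omega
    omega
  rw [sub_eq_zero] at zero
  by_cases ha : f.coeff 0 = 0
  · have hr0 : r = 0 := by
      rw [ha] at zero
      simp [hf0] at zero
      exact zero
    refine ⟨hr0, ?_⟩
    by_contra hs0
    rw [hr0, zero_add] at h
    obtain ⟨g, rfl⟩ := X_dvd_iff.2 ha
    have hg : ¬ (X : K[X]) ∣ g := by
      rintro ⟨w, rfl⟩
      have := hf X ⟨w, by ring⟩
      exact not_isUnit_X this
    have h1 : (X : K[X]) ^ (c + 1) ∣ s * g ^ c := by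
      have : (X : K[X]) ^ Q = X ^ c * X ^ (c + 1) := by rw [hc]; ring
      rw [this, mul_pow, mul_left_comm] at h
      exact (mul_dvd_mul_iff_left (pow_ne_zero _ X_ne_zero)).1 h
    have h2 : (X : K[X]) ^ (c + 1) ∣ s := by
      refine (IsCoprime.dvd_of_dvd_mul_right ?_ h1)
      apply IsCoprime.pow
      exact (irreducible_X.coprime_iff_not_dvd).2 hg
    have h3 := natDegree_le_of_dvd h2 hs0
    rw [natDegree_X_pow] at h3
    have := hB0 s hs hs0
    omega
  · have hr0 := stp_descent f hf hm _ ha _ r s le_rfl zero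
    refine ⟨hr0, ?_⟩
    rw [hr0] at zero
    simp [ha] at zero
    exact zero

theorem stp_nonvanish {K : Type*} [Field K] [Fintype K] (hodd : Odd (Fintype.card K)) (f : K[X]) (hf : Squarefree f)
    (hm : 1 ≤ f.natDegree) (B : ℕ) (hB : 2 * B + f.natDegree ≤ Fintype.card K) (J : ℕ) :
    ∀ r s : ℕ → K[X], (∀ j, (r j).degree < B) → (∀ j, (s j).degree < B) →
    ∑ j ∈ Finset.range J, X ^ (j * Fintype.card K) * (r j + s j * f ^ ((Fintype.card K - 1) / 2)) = 0 →
    ∀ j < J, r j = 0 ∧ s j = 0 := by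
  induction J with
  | zero => intro r s _ _ _ j hj; omega
  | succ J ih =>
    intro r s hr hs h
    rw [Finset.sum_range_succ'] at h
    have e : ∑ j ∈ Finset.range J, X ^ ((j + 1) * Fintype.card K) *
        (r (j+1) + s (j+1) * f ^ ((Fintype.card K - 1) / 2)) = X ^ Fintype.card K *
        ∑ j ∈ Finset.range J, X ^ (j * Fintype.card K) *
        (r (j+1) + s (j+1) * f ^ ((Fintype.card K - 1) / 2)) := by
      rw [Finset.mul_sum]
      refine Finset.sum_congr rfl fun j _ => ?_
      rw [← mul_assoc, ← pow_add]; ring_nf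
    rw [e] at h
    have h0 : r 0 = 0 ∧ s 0 = 0 := by
      apply stp_core hodd f hf hm B hB _ _ (hr 0) (hs 0)
      rw [zero_mul, pow_zero, one_mul] at h
      exact ⟨_, eq_neg_of_add_eq_zero_right h |>.trans (mul_neg _ _).symm⟩
    rw [h0.1, h0.2] at h
    simp only [zero_mul, add_zero, mul_zero] at h
    have h' := (mul_eq_zero.1 h).resolve_left (pow_ne_zero _ X_ne_zero)
    have := ih (fun j => r (j+1)) (fun j => s (j+1)) (fun j => hr _) (fun j => hs _) h'
    intro j hj
    rcases j with _ | j
    · exact h0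
    · exact this j (by omega)

open Polynomial Classical

theorem stp_order {K : Type*} [Field K] (r : K[X]) (x : K) (l : ℕ)
    (h : ∀ k < l, (hasseDeriv k r).eval x = 0) : (X - C x) ^ l ∣ r := by
  have h1 : X ^ l ∣ taylor x r := by
    rw [X_pow_dvd_iff]
    intro d hd
    rw [taylor_coeff]; exact h d hd
  obtain ⟨w, hw⟩ := h1
  refine ⟨taylor (-x) w, ?_⟩
  have := congrArg (taylor (-x)) hw
  rw [taylor_taylor, taylor_mul, taylor_X_pow] at this
  simpa [sub_eq_add_neg] using this

theorem stp_main {K : Type*} [Field K] [Fintype K] (hodd : Odd (Fintype.card K)) (f : K[X]) (hf : Squarefree f)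
    (hm : 1 ≤ f.natDegree) (a : K) (B J l : ℕ) (hB : 2 * B + f.natDegree ≤ Fintype.card K)
    (hl : l ≤ Fintype.card K) (hJ : 1 ≤ J)
    (hdim : l * (B + l * f.natDegree + J) < 2 * J * B) :
    l * (Finset.univ.filter fun x : K => f.eval x ^ ((Fintype.card K - 1) / 2) = a).card ≤
      l * f.natDegree + B + f.natDegree * ((Fintype.card K - 1) / 2) + (J - 1) * Fintype.card K := by
  have hf0 : f ≠ 0 := by rintro rfl; simp at hm
  set Q := Fintype.card K with hQ
  set c := (Q - 1) / 2 with hc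
  set m := f.natDegree with hmdef
  have hT1 : ∀ k : Fin l, _ := fun k => stp_exists_T f hf0 l k k.2.le
  have hT2 : ∀ k : Fin l, _ := fun k => stp_exists_T f hf0 (l + c) k (by omega)
  choose T hT hTd using hT1
  choose U hU hUd using hT2
  set W := B + l * m + J with hW
  have hB0 : 0 < B := by
    rcases Nat.eq_zero_or_pos B with h | h
    · subst h; simp at hdim
    · exact h
  have hdeg : ∀ t : K[X], t ∈ degreeLT K B → t.natDegree < B := by
    intro t ht
    by_cases h0 : t = 0
    · rw [h0]; simpa using hB0
    · exact (natDegree_lt_iff_degree_lt h0).2 (mem_degreeLT.1 ht)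
  let Φ0 : Fin l → ((Fin J → degreeLT K B) × (Fin J → degreeLT K B)) →ₗ[K] K[X] := fun k =>
    { toFun := fun v => ∑ j, (T k (v.1 j) + C a * U k (v.2 j)) * X ^ (j : ℕ)
      map_add' := by
        intro x y
        rw [← Finset.sum_add_distrib]
        refine Finset.sum_congr rfl fun j _ => ?_
        simp only [Prod.fst_add, Prod.snd_add, Pi.add_apply, Submodule.coe_add, map_add]
        ring
      map_smul' := by
        intro t x
        simp only [RingHom.id_apply]
        rw [Finset.smul_sum]
        refine Finset.sum_congr rfl fun j _ => ?_
        simp only [Prod.smul_fst, Prod.smul_snd, Pi.smul_apply, Submodule.coe_smul, map_smul]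
        simp only [smul_eq_C_mul]
        ring }
  have hΦ0 : ∀ k v, Φ0 k v ∈ degreeLT K W := by
    intro k v
    change ∑ j, (T k (v.1 j) + C a * U k (v.2 j)) * X ^ (j : ℕ) ∈ degreeLT K W
    apply Submodule.sum_mem
    intro j _
    rw [mem_degreeLT]
    refine lt_of_le_of_lt degree_le_natDegree ?_
    norm_cast
    have h1 := hTd k (v.1 j)
    have h2 := hUd k (v.2 j)
    rw [← hmdef] at h1 h2
    have h3 := hdeg _ (v.1 j).2
    have h4 := hdeg _ (v.2 j).2
    have h5 : (T k (v.1 j) + C a * U k (v.2 j)).natDegree ≤ B - 1 + k * m := by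
      refine natDegree_add_le_of_degree_le (by omega) ?_
      refine (natDegree_C_mul_le _ _).trans (by omega)
    have h6 : (k : ℕ) * m ≤ l * m := Nat.mul_le_mul_right _ k.2.le
    refine lt_of_le_of_lt natDegree_mul_le ?_
    rw [natDegree_X_pow]
    have := j.2
    omega
  let Φ : ((Fin J → degreeLT K B) × (Fin J → degreeLT K B)) →ₗ[K] (Fin l → degreeLT K W) := LinearMap.pi fun k => (Φ0 k).codRestrict _ (hΦ0 k)
  have fd : ∀ n, Module.finrank K (degreeLT K n) = n := by
    intro n
    rw [LinearEquiv.finrank_eq (degreeLTEquiv K n)]; simp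
  have : ∀ n, Module.Finite K (degreeLT K n) := fun n => Module.Finite.equiv (degreeLTEquiv K n).symm
  have hrank : Module.finrank K (Fin l → degreeLT K W) < Module.finrank K ((Fin J → degreeLT K B) × (Fin J → degreeLT K B)) := by
    rw [Module.finrank_prod, Module.finrank_pi_fintype, Module.finrank_pi_fintype]
    simp only [fd, Finset.sum_const, Finset.card_univ, Fintype.card_fin, smul_eq_mul]
    linarith
  have hker : LinearMap.ker Φ ≠ ⊥ := LinearMap.ker_ne_bot_of_finrank_lt hrank
  obtain ⟨v, hv, hv0⟩ := (Submodule.ne_bot_iff _).1 hker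
  have hv' : ∀ k, ∑ j, (T k (v.1 j) + C a * U k (v.2 j)) * X ^ (j : ℕ) = 0 := by
    intro k
    have := congrFun (LinearMap.mem_ker.1 hv) k
    exact congrArg Subtype.val this
  let R : K[X] := ∑ j : Fin J, X ^ ((j : ℕ) * Q) * (f ^ l * (v.1 j : K[X]) + f ^ (l + c) * (v.2 j : K[X]))
  have hR0 : R ≠ 0 := by
    intro hR
    apply hv0
    let r : ℕ → K[X] := fun j => if h : j < J then (v.1 ⟨j, h⟩ : K[X]) else 0
    let s : ℕ → K[X] := fun j => if h : j < J then (v.2 ⟨j, h⟩ : K[X]) else 0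
    have hr : ∀ j, (r j).degree < B := by
      intro j
      simp only [r]
      split_ifs with h
      · exact mem_degreeLT.1 (v.1 ⟨j, h⟩).2
      · rw [degree_zero]; exact WithBot.bot_lt_coe _
    have hs : ∀ j, (s j).degree < B := by
      intro j
      simp only [s]
      split_ifs with h
      · exact mem_degreeLT.1 (v.2 ⟨j, h⟩).2
      · rw [degree_zero]; exact WithBot.bot_lt_coe _
    have hz : ∑ j ∈ Finset.range J, X ^ (j * Q) * (r j + s j * f ^ c) = 0 := by
      rw [Finset.sum_range]
      apply (mul_eq_zero.1 (_ : f ^ l * _ = 0)).resolve_left (pow_ne_zero l hf0)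
      rw [← hR, Finset.mul_sum]
      refine Finset.sum_congr rfl fun j _ => ?_
      have h1 : r j = v.1 j := by simp [r]
      have h2 : s j = v.2 j := by simp [s]
      rw [h1, h2]; ring
    have := stp_nonvanish hodd f hf hm B hB J r s hr hs hz
    refine Prod.ext ?_ ?_
    · funext j
      have h1 := (this j j.2).1
      apply Subtype.ext
      simpa [r] using h1
    · funext j
      have h1 := (this j j.2).2
      apply Subtype.ext
      simpa [s] using h1
  have hder : ∀ k : Fin l, hasseDeriv k R = f ^ (l - k) *
      ∑ j : Fin J, X ^ ((j : ℕ) * Q) * (T k (v.1 j) + f ^ c * U k (v.2 j)) := by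
    intro k
    simp only [R]
    rw [map_sum, Finset.mul_sum]
    refine Finset.sum_congr rfl fun j _ => ?_
    rw [stp_hasse_XQj _ (lt_of_lt_of_le k.2 hl), map_add, hT, hU]
    have : l + c - (k : ℕ) = (l - k) + c := by have := k.2; omega
    rw [this, pow_add]; ring
  set S := Finset.univ.filter fun x : K => f.eval x ^ c = a with hS
  have hdvd : ∀ x ∈ S, (X - C x) ^ l ∣ R := by
    intro x hx
    have hx : f.eval x ^ c = a := by simpa [hS] using hx
    apply stp_order
    intro k hk
    rw [hder ⟨k, hk⟩, eval_mul]
    have h1 := congrArg (eval x) (hv' ⟨k, hk⟩)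
    have h2 : eval x (∑ j : Fin J, X ^ ((j : ℕ) * Q) * (T ⟨k, hk⟩ (v.1 j) + f ^ c * U ⟨k, hk⟩ (v.2 j))) = 0 := by
      rw [eval_zero] at h1
      rw [← h1, eval_finsetSum, eval_finsetSum]
      refine Finset.sum_congr rfl fun j _ => ?_
      simp only [eval_mul, eval_pow, eval_X, eval_add, eval_C, hx]
      rw [mul_comm (j : ℕ) Q, pow_mul, FiniteField.pow_card]
      ring
    rw [h2, mul_zero]
  have hprod : ∏ x ∈ S, (X - C x) ^ l ∣ R := by
    apply Finset.prod_dvd_of_coprime _ hdvd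
    intro x _ y _ hxy
    apply IsCoprime.pow
    exact isCoprime_X_sub_C_of_isUnit_sub (sub_ne_zero.2 hxy).isUnit
  have hd := natDegree_le_of_dvd hprod hR0
  rw [natDegree_prod_of_monic _ _ (fun x _ => (monic_X_sub_C x).pow l)] at hd
  simp only [natDegree_pow, natDegree_X_sub_C, mul_one, Finset.sum_const, smul_eq_mul] at hd
  rw [mul_comm]
  refine hd.trans ?_
  apply natDegree_sum_le_of_forall_le
  intro j _
  refine natDegree_mul_le.trans ?_
  rw [natDegree_X_pow]
  have h1 : (j : ℕ) * Q ≤ (J - 1) * Q := Nat.mul_le_mul_right _ (by have := j.2; omega)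
  have h3 := hdeg _ (v.1 j).2
  have h4 := hdeg _ (v.2 j).2
  have h2 : (f ^ l * (v.1 j : K[X]) + f ^ (l + c) * (v.2 j : K[X])).natDegree ≤ (l + c) * m + B := by
    refine natDegree_add_le_of_degree_le ?_ ?_
    · refine natDegree_mul_le.trans ?_
      rw [natDegree_pow, ← hmdef]
      have : l * m ≤ (l + c) * m := Nat.mul_le_mul_right _ (by omega)
      omega
    · refine natDegree_mul_le.trans ?_
      rw [natDegree_pow, ← hmdef]
      omega
  have h5 : (l + c) * m = l * m + m * c := by ring
  omega

theorem stp_arith (h N m Q t : ℝ) (hh : 0 < h) (hm : 0 ≤ m) (ht : t * t = Q) (k1 : t ≤ 2 * (2 * h)) (k2 : 1 ≤ t)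
    (j : 2 * h * N ≤ 2 * h * m + (h + 5 * m) * Q) : N ≤ Q / 2 + 11 * m * t := by
  have z1 : Q ≤ 4 * h * t := by nlinarith
  have z2 : h * m ≤ h * m * t := by
    have : 0 ≤ h * m := by positivity
    nlinarith
  have z3 : m * Q ≤ m * (4 * h * t) := by gcongr
  have : 2 * h * N ≤ 2 * h * (Q / 2 + 11 * m * t) := by linarith
  exact le_of_mul_le_mul_left this (by positivity)

theorem stp_final {K : Type*} [Field K] [Fintype K] (hodd : Odd (Fintype.card K)) (f : K[X]) (hf : Squarefree f)
    (hm : 1 ≤ f.natDegree) (a : K) :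
    ((Finset.univ.filter fun x : K => f.eval x ^ ((Fintype.card K - 1) / 2) = a).card : ℝ) ≤
      (Fintype.card K : ℝ) / 2 + 11 * f.natDegree * Real.sqrt (Fintype.card K) := by
  set Q := Fintype.card K with hQ
  set m := f.natDegree with hmdef
  set N := (Finset.univ.filter fun x : K => f.eval x ^ ((Q - 1) / 2) = a).card with hN
  have hNQ : N ≤ Q := by rw [hN, hQ]; exact Finset.card_le_univ _
  have hm' : (1 : ℝ) ≤ m := by exact_mod_cast hm
  have hsq : Real.sqrt Q * Real.sqrt Q = Q := Real.mul_self_sqrt (by positivity)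
  have hs0 := Real.sqrt_nonneg (Q : ℝ)
  by_cases hbig : Q < 64 * m ^ 2
  · have h1 : Real.sqrt Q ≤ 8 * m := by
      rw [Real.sqrt_le_left (by positivity)]
      have : (Q : ℝ) < 64 * m ^ 2 := by exact_mod_cast hbig
      nlinarith
    have h2 : (N : ℝ) ≤ Q := by exact_mod_cast hNQ
    nlinarith
  push Not at hbig
  set s := Nat.sqrt Q with hs
  have hs1 : s * s ≤ Q := Nat.sqrt_le Q
  have hs2 : Q < (s + 1) * (s + 1) := Nat.lt_succ_sqrt Q
  have hs3 : 8 * m ≤ s := by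
    rw [hs, Nat.le_sqrt]; nlinarith
  obtain ⟨h, hh⟩ : ∃ h, h = s / 2 := ⟨_, rfl⟩
  have hl1 : 2 * h ≤ s := by omega
  have hl2 : s ≤ 2 * h + 1 := by omega
  have hh1 : 1 ≤ h := by omega
  have hll : (2 * h) * (2 * h) ≤ Q := (Nat.mul_le_mul hl1 hl1).trans hs1
  have h8 : 8 * (2 * h) ≤ Q := by nlinarith
  have h64 : 64 * m ≤ Q := by nlinarith
  obtain ⟨B, hB⟩ : ∃ B, B = (Q - m) / 2 := ⟨_, rfl⟩
  have hB3 : Q ≤ 3 * B := by omega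
  have hmain := stp_main hodd f hf hm a B (h + 4 * m) (2 * h) (by omega) (by omega) (by omega) (by
    rw [← hmdef]
    have e1 : 2 * (h + 4 * m) * B = 2 * h * B + 8 * m * B := by ring
    have e2 : 2 * h * (B + 2 * h * m + (h + 4 * m)) = 2 * h * B + (2 * h) * (2 * h) * m + 2 * (h * h) + (8 * (2 * h)) * m / 2 := by
      have : (8 * (2 * h)) * m / 2 = 8 * h * m := by
        rw [show (8 * (2 * h)) * m = 2 * (8 * h * m) by ring]; simp
      rw [this]; ring
    rw [e1, e2]
    have i1 : (2 * h) * (2 * h) * m ≤ Q * m := Nat.mul_le_mul_right _ hll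
    have i2 : 2 * (2 * (h * h)) ≤ Q := by nlinarith
    have i3 : (8 * (2 * h)) * m ≤ Q * m := Nat.mul_le_mul_right _ h8
    have i4 : 8 * (Q * m) ≤ 3 * (8 * m * B) := by nlinarith
    have i5 : Q ≤ Q * m := Nat.le_mul_of_pos_right _ hm
    omega)
  rw [← hmdef, ← hQ, ← hN] at hmain
  have j1 : m * ((Q - 1) / 2) ≤ m * Q := Nat.mul_le_mul_left _ (by omega)
  have j2 : (h + 4 * m - 1) * Q + Q = (h + 4 * m) * Q := by
    rw [← Nat.succ_mul]; congr 1; omega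
  have j3 : 2 * h * N ≤ 2 * h * m + (h + 5 * m) * Q := by
    have : (h + 5 * m) * Q = (h + 4 * m) * Q + m * Q := by ring
    omega
  have j3' : 2 * (h : ℝ) * N ≤ 2 * h * m + (h + 5 * m) * Q := by exact_mod_cast j3
  have k1 : Real.sqrt Q ≤ 2 * (2 * h) := by
    rw [Real.sqrt_le_left (by positivity)]
    have : Q ≤ (2 * (2 * h)) ^ 2 := by nlinarith
    exact_mod_cast this
  have k2 : 1 ≤ Real.sqrt Q := by
    rw [Real.one_le_sqrt]
    have : 1 ≤ Q := by omega
    exact_mod_cast this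
  have hh' : (0 : ℝ) < h := by exact_mod_cast hh1
  exact stp_arith h N m Q (Real.sqrt Q) hh' (by linarith) hsq k1 k2 j3'

open Polynomial Classical

noncomputable section

def stpMon (Fq : Type*) [Field Fq] [Fintype Fq] (k : ℕ) : Finset Fq[X] :=
  have : Fintype (degreeLT Fq k) := Fintype.ofEquiv _ (degreeLTEquiv Fq k).toEquiv.symm
  Finset.univ.image (fun H : degreeLT Fq k => X ^ k + (H : Fq[X]))

def stpIrr (Fq : Type*) [Field Fq] [Fintype Fq] (k : ℕ) : Finset Fq[X] :=
  (stpMon Fq k).filter Irreducible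

def stpIrrLe (Fq : Type*) [Field Fq] [Fintype Fq] (N : ℕ) : Finset Fq[X] :=
  (Finset.range (N + 1)).biUnion (stpIrr Fq)

end

theorem stp_mem_mon {Fq : Type*} [Field Fq] [Fintype Fq] (k : ℕ) (F : Fq[X]) :
    F ∈ stpMon Fq k ↔ F.Monic ∧ F.natDegree = k := by
  simp only [stpMon, Finset.mem_image, Finset.mem_univ, true_and]
  constructor
  · rintro ⟨⟨H, hH⟩, rfl⟩
    rw [mem_degreeLT] at hH
    refine ⟨monic_X_pow_add hH, ?_⟩
    rw [natDegree_add_eq_left_of_degree_lt, natDegree_X_pow]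
    rwa [degree_X_pow]
  · rintro ⟨h1, h2⟩
    refine ⟨⟨F - X ^ k, ?_⟩, by simp⟩
    rw [mem_degreeLT]
    have := degree_sub_lt_left (p := F) (q := X ^ k) (by rw [degree_X_pow, degree_eq_natDegree h1.ne_zero, h2])
      h1.ne_zero (by rw [h1.leadingCoeff, (monic_X_pow k).leadingCoeff])
    rwa [degree_eq_natDegree h1.ne_zero, h2] at this

theorem stp_card_mon {Fq : Type*} [Field Fq] [Fintype Fq] (k : ℕ) :
    (stpMon Fq k).card = Fintype.card Fq ^ k := by
  let inst : Fintype (degreeLT Fq k) := Fintype.ofEquiv _ (degreeLTEquiv Fq k).toEquiv.symm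
  have e : stpMon Fq k = Finset.univ.image (fun H : degreeLT Fq k => X ^ k + (H : Fq[X])) := rfl
  rw [e, Finset.card_image_of_injective]
  · rw [Finset.card_univ, Fintype.card_congr (degreeLTEquiv Fq k).toEquiv]; simp
  · intro x y h
    exact Subtype.ext (add_left_cancel h)

theorem stp_mem_irr {Fq : Type*} [Field Fq] [Fintype Fq] (k : ℕ) (F : Fq[X]) :
    F ∈ stpIrr Fq k ↔ F.Monic ∧ Irreducible F ∧ F.natDegree = k := by
  rw [stpIrr, Finset.mem_filter, stp_mem_mon]; tauto

theorem stp_card_irr_le {Fq : Type*} [Field Fq] [Fintype Fq] (k : ℕ) :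
    (stpIrr Fq k).card ≤ Fintype.card Fq ^ k := by
  rw [← stp_card_mon]; exact Finset.card_filter_le _ _

theorem stp_mem_irrLe {Fq : Type*} [Field Fq] [Fintype Fq] (k : ℕ) (F : Fq[X]) :
    F ∈ stpIrrLe Fq k ↔ F.Monic ∧ Irreducible F ∧ F.natDegree ≤ k := by
  simp only [stpIrrLe, Finset.mem_biUnion, stp_mem_irr, Finset.mem_range]
  constructor
  · rintro ⟨a, h1, h2, h3, h4⟩; exact ⟨h2, h3, by omega⟩
  · rintro ⟨h1, h2, h3⟩; exact ⟨_, by omega, h1, h2, rfl⟩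

theorem stp_fin_adj {Fq : Type*} [Field Fq] [Fintype Fq] (P : Fq[X]) (hP : P.Monic) : Finite (AdjoinRoot P) := by
  have := hP.finite_adjoinRoot
  exact Module.finite_of_finite Fq

theorem stp_chi_eq {Fq : Type*} [Field Fq] (P : Fq[X]) [Fact (Irreducible P)]
    [Fintype (AdjoinRoot P)] (F : Fq[X]) : chiP P F = quadraticChar (AdjoinRoot P) (AdjoinRoot.mk P F) := by
  rw [quadraticChar_apply, quadraticCharFun, chiP]
  have h1 : P ∣ F ↔ AdjoinRoot.mk P F = 0 := AdjoinRoot.mk_eq_zero.symm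
  have h2 : (∃ G, P ∣ (F - G ^ 2)) ↔ IsSquare (AdjoinRoot.mk P F) := by
    constructor
    · rintro ⟨G, hG⟩
      refine ⟨AdjoinRoot.mk P G, ?_⟩
      rw [← AdjoinRoot.mk_eq_zero, map_sub, sub_eq_zero] at hG
      rw [hG, map_pow, sq]
    · rintro ⟨g, hg⟩
      obtain ⟨G, rfl⟩ := AdjoinRoot.mk_surjective g
      refine ⟨G, ?_⟩
      rw [← AdjoinRoot.mk_eq_zero, map_sub, sub_eq_zero, hg, map_pow, sq]
  simp only [h1, h2]

theorem stp_card_adj {Fq : Type*} [Field Fq] [Fintype Fq] (P : Fq[X]) (hP : P.Monic)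
    [Fact (Irreducible P)] [Fintype (AdjoinRoot P)] :
    Fintype.card (AdjoinRoot P) = Fintype.card Fq ^ P.natDegree := by
  rw [Module.card_eq_pow_finrank (K := Fq), (AdjoinRoot.powerBasis hP.ne_zero).finrank,
    AdjoinRoot.powerBasis_dim]

theorem stp_char_ne {K : Type*} [Field K] [Fintype K] (h : Odd (Fintype.card K)) : ringChar K ≠ 2 := by
  intro h2
  rw [FiniteField.even_card_iff_char_two] at h2
  rw [Nat.odd_iff] at h
  omega

theorem stp_chi_mul {Fq : Type*} [Field Fq] [Fintype Fq] (P : Fq[X]) (hP : P.Monic) (hi : Irreducible P)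
    (F G : Fq[X]) : chiP P (F * G) = chiP P F * chiP P G := by
  have : Fact (Irreducible P) := ⟨hi⟩
  have := stp_fin_adj P hP
  let := Fintype.ofFinite (AdjoinRoot P)
  simp only [stp_chi_eq, map_mul]

theorem stp_chi_one {Fq : Type*} [Field Fq] [Fintype Fq] (P : Fq[X]) (hP : P.Monic) (hi : Irreducible P) :
    chiP P 1 = 1 := by
  have : Fact (Irreducible P) := ⟨hi⟩
  have := stp_fin_adj P hP
  let := Fintype.ofFinite (AdjoinRoot P)
  simp only [stp_chi_eq, map_one]

theorem stp_chi_prod {Fq : Type*} [Field Fq] [Fintype Fq] (P : Fq[X]) (hP : P.Monic) (hi : Irreducible P)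
    (T : Finset Fq[X]) : chiP P (∏ Q ∈ T, Q) = ∏ Q ∈ T, chiP P Q := by
  induction T using Finset.induction_on with
  | empty => simpa using stp_chi_one P hP hi
  | insert a s ha ih => rw [Finset.prod_insert ha, Finset.prod_insert ha, stp_chi_mul P hP hi, ih]

theorem stp_chi_cases {Fq : Type*} [Field Fq] (P F : Fq[X]) :
    chiP P F = 0 ∨ chiP P F = 1 ∨ chiP P F = -1 := by
  unfold chiP; split_ifs <;> simp

theorem stp_chi_abs {Fq : Type*} [Field Fq] (P F : Fq[X]) : |(chiP P F : ℝ)| ≤ 1 := by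
  rcases stp_chi_cases P F with h | h | h <;> simp [h]

/-- values at roots -/
theorem stp_chi_root {Fq K : Type*} [Field Fq] [Fintype Fq] [Field K] [Fintype K] [Algebra Fq K]
    (hodd : Odd (Fintype.card Fq)) (P : Fq[X]) (hP : P.Monic) (hi : Irreducible P)
    (hc : Fintype.card K = Fintype.card Fq ^ P.natDegree) (x : K) (hx : aeval x P = 0) (F : Fq[X]) :
    (aeval x F) ^ ((Fintype.card K - 1) / 2) = (chiP P F : K) := by
  have : Fact (Irreducible P) := ⟨hi⟩
  have := stp_fin_adj P hP
  let := Fintype.ofFinite (AdjoinRoot P)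
  have hcard := stp_card_adj P hP
  have ho : Odd (Fintype.card (AdjoinRoot P)) := by rw [hcard]; exact hodd.pow
  have h1 := quadraticChar_eq_pow_of_char_ne_two' (stp_char_ne ho) (AdjoinRoot.mk P F)
  rw [← stp_chi_eq] at h1
  let φ : AdjoinRoot P →+* K := AdjoinRoot.lift (algebraMap Fq K) x hx
  have h2 := congrArg φ h1
  have h3 : φ (AdjoinRoot.mk P F) = aeval x F := AdjoinRoot.lift_mk hx F
  rw [map_intCast, map_pow, h3] at h2
  rw [h2, hc, ← hcard]
  have : (Fintype.card (AdjoinRoot P) - 1) / 2 = Fintype.card (AdjoinRoot P) / 2 := by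
    rw [Nat.odd_iff] at ho; omega
  rw [this]

/-- orthogonality -/
theorem stp_chi_sum {Fq : Type*} [Field Fq] [Fintype Fq] 
    (hodd : Odd (Fintype.card Fq)) (P : Fq[X]) (hP : P.Monic) (hi : Irreducible P) (k : ℕ)
    (hk : P.natDegree ≤ k) : ∑ F ∈ stpMon Fq k, chiP P F = 0 := by
  have : Fact (Irreducible P) := ⟨hi⟩
  have := stp_fin_adj P hP
  let := Fintype.ofFinite (AdjoinRoot P)
  have hcard := stp_card_adj P hP
  have ho : Odd (Fintype.card (AdjoinRoot P)) := by rw [hcard]; exact hodd.pow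
  let : Fintype (degreeLT Fq k) := Fintype.ofEquiv _ (degreeLTEquiv Fq k).toEquiv.symm
  have e : stpMon Fq k = Finset.univ.image (fun H : degreeLT Fq k => X ^ k + (H : Fq[X])) := rfl
  rw [e, Finset.sum_image (by intro x _ y _ h; exact Subtype.ext (add_left_cancel h))]
  simp only [stp_chi_eq]
  let φ : degreeLT Fq k →+ AdjoinRoot P := (AdjoinRoot.mk P).toAddMonoidHom.comp (degreeLT Fq k).subtype.toAddMonoidHom
  have hφ : Function.Surjective φ := by
    intro y
    obtain ⟨G, rfl⟩ := AdjoinRoot.mk_surjective y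
    refine ⟨⟨G %ₘ P, ?_⟩, ?_⟩
    · rw [mem_degreeLT]
      refine lt_of_lt_of_le (degree_modByMonic_lt G hP) ?_
      rw [degree_eq_natDegree hP.ne_zero]
      exact_mod_cast hk
    · change AdjoinRoot.mk P (G %ₘ P) = AdjoinRoot.mk P G
      rw [AdjoinRoot.mk_eq_mk]
      have := modByMonic_add_div G P
      exact ⟨-(G /ₘ P), by linear_combination this⟩
  have h1 : ∀ H : degreeLT Fq k, quadraticChar (AdjoinRoot P) (AdjoinRoot.mk P (X ^ k + (H : Fq[X]))) =
      (fun y => quadraticChar (AdjoinRoot P) (AdjoinRoot.mk P (X ^ k) + y)) (φ H) := by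
    intro H; rw [map_add]; rfl
  rw [Finset.sum_congr rfl (fun H _ => h1 H)]
  rw [Finset.sum_comp (fun y => quadraticChar (AdjoinRoot P) (AdjoinRoot.mk P (X ^ k) + y)) φ, Finset.image_univ_of_surjective hφ]
  have h2 : ∀ y : AdjoinRoot P, (Finset.univ.filter fun H => φ H = y).card = (Finset.univ.filter fun H => φ H = 0).card := by
    intro y
    exact AddMonoidHom.card_fiber_eq_of_mem_range φ (hφ y) (hφ 0)
  simp only [h2]
  rw [← Finset.smul_sum]
  have h3 := quadraticChar_sum_zero (stp_char_ne ho)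
  rw [← Equiv.sum_comp (Equiv.addLeft (AdjoinRoot.mk P (X ^ k)))] at h3
  simp only [Equiv.coe_addLeft] at h3
  rw [h3, smul_zero]

open Polynomial Classical

theorem stp_splits {K : Type*} [Field K] [Fintype K] : (X ^ Fintype.card K - X : K[X]).Splits := by
  rw [splits_iff_card_roots, FiniteField.roots_X_pow_card_sub_X,
    FiniteField.X_pow_card_sub_X_natDegree_eq _ Fintype.one_lt_card]
  rfl

theorem stp_roots {Fq K : Type*} [Field Fq] [Fintype Fq] [Field K] [Fintype K] [Algebra Fq K]
    (P : Fq[X]) (hP : P.Monic) (hi : Irreducible P)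
    (hc : Fintype.card K = Fintype.card Fq ^ P.natDegree) :
    (Finset.univ.filter fun x : K => aeval x P = 0).card = P.natDegree := by
  have hsep : P.Separable := PerfectField.separable_of_irreducible hi
  have h1 : P ∣ X ^ (Nat.card Fq) ^ P.natDegree - X :=
    hi.natDegree_dvd_iff_dvd_X_pow_card_pow_sub_X.mp dvd_rfl
  have h2 : P.map (algebraMap Fq K) ∣ X ^ Fintype.card K - X := by
    have := Polynomial.map_dvd (algebraMap Fq K) h1
    simpa [hc] using this
  have h3 := stp_splits.of_dvd (FiniteField.X_pow_card_sub_X_ne_zero K Fintype.one_lt_card) h2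
  rw [← card_rootSet_eq_natDegree hsep h3]
  rw [← Set.toFinset_card]
  congr 1
  ext x
  simp [mem_rootSet, hP.ne_zero]

theorem stp_count {Fq K : Type*} [Field Fq] [Fintype Fq] [Field K] [Fintype K] [Algebra Fq K]
    (hodd : Odd (Fintype.card Fq)) (n : ℕ)
    (hc : Fintype.card K = Fintype.card Fq ^ n) (f : Fq[X]) (a : ℤ) :
    n * ((stpIrr Fq n).filter fun P => chiP P f = a).card ≤
    (Finset.univ.filter fun x : K => (f.map (algebraMap Fq K)).eval x ^ ((Fintype.card K - 1) / 2) = (a : K)).card := by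
  have h1 : (((stpIrr Fq n).filter fun P => chiP P f = a).biUnion
      (fun P => Finset.univ.filter fun x : K => aeval x P = 0)).card =
      n * ((stpIrr Fq n).filter fun P => chiP P f = a).card := by
    rw [Finset.card_biUnion, Finset.sum_congr rfl (g := fun _ => n), Finset.sum_const, smul_eq_mul, mul_comm]
    · intro P hP
      rw [Finset.mem_filter, stp_mem_irr] at hP
      obtain ⟨⟨hm, hi, rfl⟩, _⟩ := hP
      exact stp_roots P hm hi hc
    · intro P hP P' hP' hne
      rw [Finset.mem_coe, Finset.mem_filter, stp_mem_irr] at hP hP'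
      rw [Function.onFun, Finset.disjoint_left]
      intro x hx hx'
      simp only [Finset.mem_filter, Finset.mem_univ, true_and] at hx hx'
      exact hne ((minpoly.eq_of_irreducible_of_monic hP.1.2.1 hx hP.1.1).trans
        (minpoly.eq_of_irreducible_of_monic hP'.1.2.1 hx' hP'.1.1).symm)
  rw [← h1]
  apply Finset.card_le_card
  intro x hx
  simp only [Finset.mem_filter, Finset.mem_univ, true_and, Finset.mem_biUnion, stp_mem_irr] at hx ⊢
  obtain ⟨P, ⟨⟨hm, hi, rfl⟩, h2⟩, h3⟩ := hx
  rw [eval_map_algebraMap, stp_chi_root hodd P hm hi hc x h3 f, h2]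

theorem stp_small {Fq K : Type*} [Field Fq] [Fintype Fq] [Field K] [Fintype K] [Algebra Fq K] (n : ℕ)
    (hn : 1 ≤ n) (hc : Fintype.card K = Fintype.card Fq ^ n) :
    (Finset.univ.filter fun x : K => (minpoly Fq x).natDegree ≠ n).card ≤
    ∑ d ∈ Finset.Icc 1 (n / 2), Fintype.card Fq ^ d := by
  have hrank : Module.finrank Fq K = n := by
    have := Module.card_eq_pow_finrank (K := Fq) (V := K)
    rw [hc] at this
    exact (Nat.pow_right_injective Fintype.one_lt_card this).symm
  have hsub : (Finset.univ.filter fun x : K => (minpoly Fq x).natDegree ≠ n) ⊆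
      (Finset.Icc 1 (n / 2)).biUnion fun d => (X ^ Fintype.card Fq ^ d - X : K[X]).roots.toFinset := by
    intro x hx
    simp only [Finset.mem_filter, Finset.mem_univ, true_and] at hx
    have hxint : IsIntegral Fq x := Algebra.IsIntegral.isIntegral x
    have hd := minpoly.degree_dvd hxint
    rw [hrank] at hd
    have hpos := minpoly.natDegree_pos hxint
    obtain ⟨c, hc'⟩ := hd
    have hc2 : 2 ≤ c := by
      rcases c with _ | _ | c
      · omega
      · omega
      · omega
    rw [Finset.mem_biUnion]
    refine ⟨(minpoly Fq x).natDegree, ?_, ?_⟩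
    · rw [Finset.mem_Icc]
      refine ⟨hpos, ?_⟩
      rw [Nat.le_div_iff_mul_le (by norm_num)]
      calc _ ≤ (minpoly Fq x).natDegree * c := Nat.mul_le_mul_left _ hc2
        _ = n := hc'.symm
    · rw [Multiset.mem_toFinset, mem_roots (FiniteField.X_pow_card_pow_sub_X_ne_zero K hpos.ne' Fintype.one_lt_card)]
      have h1 : minpoly Fq x ∣ X ^ (Nat.card Fq) ^ (minpoly Fq x).natDegree - X :=
        (minpoly.irreducible hxint).natDegree_dvd_iff_dvd_X_pow_card_pow_sub_X.mp dvd_rfl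
      obtain ⟨g, hg⟩ := h1
      have h2 := congrArg (aeval x) hg
      rw [map_mul, minpoly.aeval, zero_mul] at h2
      simpa [IsRoot] using h2
  refine (Finset.card_le_card hsub).trans (Finset.card_biUnion_le.trans ?_)
  refine Finset.sum_le_sum fun d hd => ?_
  rw [Finset.mem_Icc] at hd
  refine (Multiset.toFinset_card_le _).trans ((card_roots' _).trans ?_)
  rw [FiniteField.X_pow_card_pow_sub_X_natDegree_eq K (by omega) Fintype.one_lt_card]

theorem stp_geom (q m : ℕ) (hq : 2 ≤ q) : ∑ d ∈ Finset.Icc 1 m, q ^ d ≤ 2 * q ^ m := by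
  induction m with
  | zero => simp
  | succ m ih =>
    rw [Finset.sum_Icc_succ_top (by omega)]
    have : 2 * q ^ m ≤ q ^ (m + 1) := by rw [pow_succ, mul_comm]; exact Nat.mul_le_mul_left _ hq
    omega

theorem stp_pi_lower {Fq K : Type*} [Field Fq] [Fintype Fq] [Field K] [Fintype K] [Algebra Fq K] (n : ℕ)
    (hn : 1 ≤ n) (hc : Fintype.card K = Fintype.card Fq ^ n) :
    ((Fintype.card K : ℕ) : ℝ) - 2 * Real.sqrt (Fintype.card K) ≤ n * ((stpIrr Fq n).card : ℝ) := by
  have h1 : (Finset.univ.filter fun x : K => (minpoly Fq x).natDegree = n).card ≤ n * (stpIrr Fq n).card := by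
    apply Finset.card_le_mul_card_image_of_maps_to (f := fun x => minpoly Fq x)
    · intro x hx
      simp only [Finset.mem_filter, Finset.mem_univ, true_and] at hx
      have hxint : IsIntegral Fq x := Algebra.IsIntegral.isIntegral x
      rw [stp_mem_irr]
      exact ⟨minpoly.monic hxint, minpoly.irreducible hxint, hx⟩
    · intro P hP
      rw [stp_mem_irr] at hP
      obtain ⟨hm, hi, rfl⟩ := hP
      rw [← stp_roots (K := K) P hm hi hc]
      apply Finset.card_le_card
      intro x hx
      simp only [Finset.mem_filter, Finset.mem_univ, true_and] at hx ⊢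
      rw [← hx.2, minpoly.aeval]
  have h2 := stp_small (Fq := Fq) (K := K) n hn hc
  have h3 := Finset.card_filter_add_card_filter_not (s := (Finset.univ : Finset K)) (fun x : K => (minpoly Fq x).natDegree = n)
  have h4 := stp_geom (Fintype.card Fq) (n / 2) Fintype.one_lt_card
  rw [Finset.card_univ] at h3
  have h5 : (Fintype.card Fq : ℝ) ^ (n / 2) ≤ Real.sqrt (Fintype.card K) := by
    apply Real.le_sqrt_of_sq_le
    rw [← pow_mul, hc]
    push_cast
    apply pow_le_pow_right₀
    · exact_mod_cast Fintype.card_pos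
    · omega
  have h6 : Fintype.card K ≤ n * (stpIrr Fq n).card + 2 * Fintype.card Fq ^ (n / 2) := by
    rw [← h3]; exact Nat.add_le_add h1 (h2.trans h4)
  have h7 : (Fintype.card K : ℝ) ≤ n * (stpIrr Fq n).card + 2 * (Fintype.card Fq : ℝ) ^ (n / 2) := by exact_mod_cast h6
  linarith

theorem stp_charsum_aux {Fq K : Type*} [Field Fq] [Fintype Fq] [Field K] [Fintype K] [Algebra Fq K]
    (hodd : Odd (Fintype.card Fq)) (n : ℕ) (hn : 1 ≤ n)
    (hc : Fintype.card K = Fintype.card Fq ^ n) (f : Fq[X]) (hf : Squarefree f) (hk : 1 ≤ f.natDegree) :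
    n * |∑ P ∈ stpIrr Fq n, (chiP P f : ℝ)| ≤ 25 * f.natDegree * Real.sqrt (Fintype.card K) := by
  have hoK : Odd (Fintype.card K) := by rw [hc]; exact hodd.pow
  have hsq : Squarefree (f.map (algebraMap Fq K)) := by
    rw [← PerfectField.separable_iff_squarefree] at hf ⊢
    exact hf.map
  have hdeg : (f.map (algebraMap Fq K)).natDegree = f.natDegree := natDegree_map _
  have b1 := stp_final hoK _ hsq (by rw [hdeg]; exact hk) 1
  have b2 := stp_final hoK _ hsq (by rw [hdeg]; exact hk) (-1)
  have c1 := stp_count (K := K) hodd n hc f 1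
  have c2 := stp_count (K := K) hodd n hc f (-1)
  have c0 := stp_count (K := K) hodd n hc f 0
  have b0 : (Finset.univ.filter fun x : K => (f.map (algebraMap Fq K)).eval x ^ ((Fintype.card K - 1) / 2) = ((0 : ℤ) : K)).card
      ≤ f.natDegree := by
    rw [← hdeg]
    refine le_trans ?_ ((Multiset.toFinset_card_le _).trans (card_roots' _))
    apply Finset.card_le_card
    intro x hx
    simp only [Finset.mem_filter, Finset.mem_univ, true_and, Int.cast_zero] at hx
    rw [Multiset.mem_toFinset, mem_roots hsq.ne_zero, IsRoot]
    by_contra h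
    exact pow_ne_zero _ h hx
  have hpi := stp_pi_lower (Fq := Fq) (K := K) n hn hc
  rw [hdeg] at b1 b2
  simp only [Int.cast_one, Int.cast_neg] at c1 c2
  set N1 := ((stpIrr Fq n).filter fun P => chiP P f = 1).card
  set N2 := ((stpIrr Fq n).filter fun P => chiP P f = -1).card
  set N0 := ((stpIrr Fq n).filter fun P => chiP P f = 0).card
  have htot : ((stpIrr Fq n).card : ℝ) = N1 + N2 + N0 := by
    have : (stpIrr Fq n).card = N1 + N2 + N0 := by
      simp only [N1, N2, N0, Finset.card_filter]
      rw [← Finset.sum_add_distrib, ← Finset.sum_add_distrib, Finset.card_eq_sum_ones]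
      apply Finset.sum_congr rfl
      intro P _
      rcases stp_chi_cases P f with h | h | h <;> simp [h]
    exact_mod_cast this
  have hsum : ∑ P ∈ stpIrr Fq n, (chiP P f : ℝ) = N1 - N2 := by
    simp only [N1, N2, Finset.card_filter]
    push_cast
    rw [← Finset.sum_sub_distrib]
    apply Finset.sum_congr rfl
    intro P _
    rcases stp_chi_cases P f with h | h | h <;> norm_num [h]
  have d1 : (n * N1 : ℝ) ≤ Fintype.card K / 2 + 11 * f.natDegree * Real.sqrt (Fintype.card K) :=
    le_trans (by exact_mod_cast c1) b1
  have d2 : (n * N2 : ℝ) ≤ Fintype.card K / 2 + 11 * f.natDegree * Real.sqrt (Fintype.card K) :=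
    le_trans (by exact_mod_cast c2) b2
  have d0 : (n * N0 : ℝ) ≤ f.natDegree := by exact_mod_cast c0.trans b0
  have hs : (1 : ℝ) ≤ Real.sqrt (Fintype.card K) := by
    rw [Real.one_le_sqrt]; exact_mod_cast Fintype.card_pos
  have hk' : (1 : ℝ) ≤ f.natDegree := by exact_mod_cast hk
  have hN0 : (0 : ℝ) ≤ n * N0 := by positivity
  rw [hsum]
  rw [htot] at hpi
  have e1 : (f.natDegree : ℝ) ≤ f.natDegree * Real.sqrt (Fintype.card K) := by nlinarith
  have e2 : Real.sqrt (Fintype.card K) ≤ f.natDegree * Real.sqrt (Fintype.card K) := by nlinarith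
  rw [← abs_of_nonneg (show (0 : ℝ) ≤ n by positivity), ← abs_mul, abs_le]
  constructor <;> nlinarith

theorem stp_charsum {Fq : Type*} [Field Fq] [Fintype Fq]
    (hodd : Odd (Fintype.card Fq)) (n : ℕ) (hn : 1 ≤ n) (f : Fq[X]) (hf : Squarefree f) (hk : 1 ≤ f.natDegree) :
    |∑ P ∈ stpIrr Fq n, (chiP P f : ℝ)| ≤ 25 * f.natDegree * Real.sqrt ((Fintype.card Fq : ℝ) ^ n) / n := by
  obtain ⟨p, hp⟩ := CharP.exists Fq
  have hpp : Fact p.Prime := ⟨CharP.char_is_prime Fq p⟩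
  have hn0 : NeZero n := ⟨by omega⟩
  let inst : Fintype (FiniteField.Extension Fq p n) := Fintype.ofFinite _
  have hc : Fintype.card (FiniteField.Extension Fq p n) = Fintype.card Fq ^ n := by
    have := FiniteField.natCard_extension Fq p n
    simpa [Nat.card_eq_fintype_card] using this
  have := stp_charsum_aux hodd n hn hc f hf hk
  have hn' : (0 : ℝ) < n := by exact_mod_cast hn
  rw [le_div_iff₀ hn', mul_comm]
  rw [hc] at this
  exact_mod_cast this

open Polynomial Classical

noncomputable section

def stpE {Fq : Type*} [Field Fq] (v : Fq[X] → ℝ) (S : Finset Fq[X]) : ℝ[X] :=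
  ∏ Q ∈ S, (1 + C (v Q) * X ^ Q.natDegree)

def stpDom (f g : ℝ[X]) : Prop := ∀ k, |f.coeff k| ≤ g.coeff k

end

theorem stp_dom_one : stpDom 1 1 := by
  intro k
  rw [coeff_one]; split_ifs <;> simp

theorem stp_dom_mul {f g f' g' : ℝ[X]} (h : stpDom f g) (h' : stpDom f' g') : stpDom (f * f') (g * g') := by
  intro k
  rw [coeff_mul, coeff_mul]
  refine (Finset.abs_sum_le_sum_abs _ _).trans (Finset.sum_le_sum fun x _ => ?_)
  rw [abs_mul]
  exact mul_le_mul (h _) (h' _) (abs_nonneg _) ((abs_nonneg _).trans (h _))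

theorem stp_dom_add {f g f' g' : ℝ[X]} (h : stpDom f g) (h' : stpDom f' g') : stpDom (f + f') (g + g') := by
  intro k
  rw [coeff_add, coeff_add]
  exact (abs_add_le _ _).trans (add_le_add (h k) (h' k))

theorem stp_dom_mono {a b : ℝ} (h : |a| ≤ b) (k : ℕ) : stpDom (C a * X ^ k) (C b * X ^ k) := by
  intro j
  rw [coeff_C_mul_X_pow, coeff_C_mul_X_pow]
  split_ifs
  · exact h
  · simp

theorem stp_dom_add_right {f g h : ℝ[X]} (h1 : stpDom f g) (h2 : ∀ k, 0 ≤ h.coeff k) : stpDom f (g + h) := by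
  intro k
  rw [coeff_add]
  linarith [h1 k, h2 k]

theorem stp_dom_prod {ι : Type*} (S : Finset ι) (f g : ι → ℝ[X]) (h : ∀ i ∈ S, stpDom (f i) (g i)) :
    stpDom (∏ i ∈ S, f i) (∏ i ∈ S, g i) := by
  induction S using Finset.induction_on with
  | empty => simpa using stp_dom_one
  | insert a s ha ih =>
    rw [Finset.prod_insert ha, Finset.prod_insert ha]
    exact stp_dom_mul (h a (Finset.mem_insert_self a s)) (ih fun i hi => h i (Finset.mem_insert_of_mem hi))

theorem stp_dom_eval {f : ℝ[X]} (h : ∀ k, 0 ≤ f.coeff k) (R : ℝ) (hR : 0 ≤ R) (k : ℕ) :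
    f.coeff k * R ^ k ≤ f.eval R := by
  rw [eval_eq_sum_range]
  by_cases hk : k ≤ f.natDegree
  · exact Finset.single_le_sum (f := fun i => f.coeff i * R ^ i) (fun i _ => mul_nonneg (h i) (pow_nonneg hR i))
      (Finset.mem_range.mpr (by omega))
  · rw [coeff_eq_zero_of_natDegree_lt (by omega), zero_mul]
    exact Finset.sum_nonneg fun i _ => mul_nonneg (h i) (pow_nonneg hR i)

theorem stp_E_coeff {Fq : Type*} [Field Fq] (v : Fq[X] → ℝ) (S : Finset Fq[X]) (k : ℕ) :
    (stpE v S).coeff k = ∑ T ∈ S.powerset.filter (fun T => ∑ Q ∈ T, Q.natDegree = k), ∏ Q ∈ T, v Q := by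
  rw [stpE, Finset.prod_one_add, finsetSum_coeff, Finset.sum_filter]
  apply Finset.sum_congr rfl
  intro T _
  rw [Finset.prod_mul_distrib, ← map_prod, Finset.prod_pow_eq_pow_sum, coeff_C_mul_X_pow]
  simp only [eq_comm]

theorem stp_dvd_iff {Fq : Type*} [Field Fq] (T : Finset Fq[X]) (hT : ∀ Q ∈ T, Q.Monic ∧ Irreducible Q)
    (Q : Fq[X]) (hm : Q.Monic) (hi : Irreducible Q) : Q ∣ ∏ R ∈ T, R ↔ Q ∈ T := by
  constructor
  · intro h
    obtain ⟨R, hR, h1⟩ := (hi.prime.dvd_finsetProd_iff _).mp h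
    have := eq_of_monic_of_associated hm (hT R hR).1 (hi.associated_of_dvd (hT R hR).2 h1)
    rwa [this]
  · intro h; exact Finset.dvd_prod_of_mem _ h

theorem stp_prod_mon {Fq : Type*} [Field Fq] [Fintype Fq] (T : Finset Fq[X]) (hT : ∀ Q ∈ T, Q.Monic ∧ Irreducible Q) :
    ∏ R ∈ T, R ∈ stpMon Fq (∑ Q ∈ T, Q.natDegree) := by
  rw [stp_mem_mon]
  exact ⟨monic_prod_of_monic _ _ fun Q hQ => (hT Q hQ).1, natDegree_prod_of_monic _ _ fun Q hQ => (hT Q hQ).1⟩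

theorem stp_prod_sqf {Fq : Type*} [Field Fq] (T : Finset Fq[X]) (hT : ∀ Q ∈ T, Q.Monic ∧ Irreducible Q) :
    Squarefree (∏ R ∈ T, R) := by
  apply Finset.squarefree_prod_of_pairwise_isCoprime
  · intro Q hQ Q' hQ' hne
    refine (((hT Q hQ).2.coprime_iff_not_dvd).mpr fun h => hne ?_).isRelPrime
    exact eq_of_monic_of_associated (hT Q hQ).1 (hT Q' hQ').1 ((hT Q hQ).2.associated_of_dvd (hT Q' hQ').2 h)
  · intro Q hQ; exact (hT Q hQ).2.squarefree

theorem stp_E_le {Fq : Type*} [Field Fq] [Fintype Fq] (t : ℝ) (ht : 0 ≤ t) (S : Finset Fq[X])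
    (hS : ∀ Q ∈ S, Q.Monic ∧ Irreducible Q) (k : ℕ) :
    (stpE (fun Q => t ^ Q.natDegree) S).coeff k ≤ (Fintype.card Fq * t) ^ k := by
  rw [stp_E_coeff]
  have h1 : ∀ T ∈ S.powerset.filter (fun T => ∑ Q ∈ T, Q.natDegree = k), ∏ Q ∈ T, t ^ Q.natDegree = t ^ k := by
    intro T hT
    rw [Finset.mem_filter] at hT
    rw [Finset.prod_pow_eq_pow_sum, hT.2]
  rw [Finset.sum_congr rfl h1, Finset.sum_const, nsmul_eq_mul, mul_pow]
  apply mul_le_mul_of_nonneg_right _ (pow_nonneg ht k)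
  have h2 : (S.powerset.filter (fun T => ∑ Q ∈ T, Q.natDegree = k)).card ≤ (stpMon Fq k).card := by
    apply Finset.card_le_card_of_injOn (fun T => ∏ R ∈ T, R)
    · intro T hT
      rw [Finset.mem_coe, Finset.mem_filter, Finset.mem_powerset] at hT
      have := stp_prod_mon T (fun Q hQ => hS Q (hT.1 hQ))
      rwa [hT.2] at this
    · intro T hT T' hT' h
      rw [Finset.mem_coe, Finset.mem_filter, Finset.mem_powerset] at hT hT'
      have e1 := stp_dvd_iff T (fun Q hQ => hS Q (hT.1 hQ))
      have e2 := stp_dvd_iff T' (fun Q hQ => hS Q (hT'.1 hQ))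
      simp only at h
      ext Q
      constructor
      · intro hQ
        have hq := hS Q (hT.1 hQ)
        rw [← e2 Q hq.1 hq.2, ← h, e1 Q hq.1 hq.2]; exact hQ
      · intro hQ
        have hq := hS Q (hT'.1 hQ)
        rw [← e1 Q hq.1 hq.2, h, e2 Q hq.1 hq.2]; exact hQ
  rw [stp_card_mon] at h2
  exact_mod_cast h2

theorem stp_E_stable {Fq : Type*} [Field Fq] [Fintype Fq] (v : Fq[X] → ℝ) (k N : ℕ) (h : k ≤ N) :
    (stpE v (stpIrrLe Fq N)).coeff k = (stpE v (stpIrrLe Fq k)).coeff k := by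
  rw [stp_E_coeff, stp_E_coeff]
  congr 1
  ext T
  simp only [Finset.mem_filter, Finset.mem_powerset]
  constructor
  · rintro ⟨h1, h2⟩
    refine ⟨fun Q hQ => ?_, h2⟩
    have := h1 hQ
    rw [stp_mem_irrLe] at this ⊢
    refine ⟨this.1, this.2.1, ?_⟩
    rw [← h2]
    exact Finset.single_le_sum (f := fun Q : Fq[X] => Q.natDegree) (fun _ _ => Nat.zero_le _) hQ
  · rintro ⟨h1, h2⟩
    refine ⟨fun Q hQ => ?_, h2⟩
    have := h1 hQ
    rw [stp_mem_irrLe] at this ⊢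
    exact ⟨this.1, this.2.1, this.2.2.trans h⟩

/-- `|coeff| ≤ k+1` -/
theorem stp_E_two {Fq : Type*} [Field Fq] [Fintype Fq] (v : Fq[X] → ℝ) (S : Finset Fq[X])
    (hS : ∀ Q ∈ S, Q.Monic ∧ Irreducible Q)
    (hv : ∀ Q ∈ S, |v Q| ≤ 2 * ((Fintype.card Fq : ℝ)⁻¹) ^ Q.natDegree) (k : ℕ) :
    |(stpE v S).coeff k| ≤ k + 1 := by
  have hq : (0 : ℝ) < Fintype.card Fq := by exact_mod_cast Fintype.card_pos
  set t : ℝ := (Fintype.card Fq : ℝ)⁻¹ with ht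
  have ht0 : 0 ≤ t := by positivity
  have h1 : stpDom (stpE v S) (stpE (fun Q => t ^ Q.natDegree) S * stpE (fun Q => t ^ Q.natDegree) S) := by
    rw [stpE, stpE, ← Finset.prod_mul_distrib]
    apply stp_dom_prod
    intro Q hQ
    have e : (1 + C (t ^ Q.natDegree) * X ^ Q.natDegree) * (1 + C (t ^ Q.natDegree) * X ^ Q.natDegree)
      = (1 + C (2 * t ^ Q.natDegree) * X ^ Q.natDegree) + C (t ^ Q.natDegree * t ^ Q.natDegree) * X ^ (2 * Q.natDegree) := by
      simp only [C_mul]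
      have : (C (2 : ℝ) : ℝ[X]) = 2 := rfl
      rw [this]
      ring
    rw [e]
    apply stp_dom_add_right
    · exact stp_dom_add stp_dom_one (stp_dom_mono (hv Q hQ) _)
    · intro k
      rw [coeff_C_mul_X_pow]
      split_ifs
      · positivity
      · exact le_rfl
  refine (h1 k).trans ?_
  rw [coeff_mul]
  have h0 : ∀ k, 0 ≤ (stpE (fun Q => t ^ Q.natDegree) S).coeff k := by
    intro k
    rw [stp_E_coeff]
    exact Finset.sum_nonneg fun T _ => Finset.prod_nonneg fun Q _ => pow_nonneg ht0 _
  have h2 : ∀ k, (stpE (fun Q => t ^ Q.natDegree) S).coeff k ≤ 1 := by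
    intro k
    have := stp_E_le t ht0 S hS k
    rwa [ht, mul_inv_cancel₀ hq.ne', one_pow, ← ht] at this
  calc _ ≤ ∑ x ∈ Finset.HasAntidiagonal.antidiagonal k, (1 : ℝ) :=
        Finset.sum_le_sum fun x _ => mul_le_one₀ (h2 _) (h0 _) (h2 _)
    _ = k + 1 := by simp

theorem stp_sieve {Fq : Type*} [Field Fq] [Fintype Fq] (w : Fq[X] → ℝ) (hw : ∀ F G, w (F * G) = w F * w G)
    (S : Finset Fq[X]) (hS : ∀ Q ∈ S, Q.Monic ∧ Irreducible Q) :
    ((stpE (fun Q => - w Q) S : ℝ[X]) : PowerSeries ℝ) * PowerSeries.mk (fun k => ∑ F ∈ stpMon Fq k, w F) =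
    PowerSeries.mk (fun k => ∑ F ∈ (stpMon Fq k).filter (fun F => ∀ Q ∈ S, ¬ Q ∣ F), w F) := by
  induction S using Finset.induction_on with
  | empty => simp [stpE]
  | insert Q S ha ih =>
    have ih' := ih fun Q hQ => hS Q (Finset.mem_insert_of_mem hQ)
    have hQ := hS Q (Finset.mem_insert_self _ _)
    rw [stpE, Finset.prod_insert ha, Polynomial.coe_mul, mul_assoc]
    rw [stpE] at ih'
    rw [ih']
    ext k
    simp only [coe_add, coe_one, coe_mul, coe_C, coe_pow, coe_X, add_mul, one_mul, map_add, mul_assoc,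
      PowerSeries.coeff_C_mul, PowerSeries.coeff_X_pow_mul', PowerSeries.coeff_mk]
    rw [← Finset.sum_filter_add_sum_filter_not ((stpMon Fq k).filter (fun F => ∀ Q ∈ S, ¬ Q ∣ F)) (fun F => Q ∣ F)]
    have e1 : (((stpMon Fq k).filter (fun F => ∀ Q ∈ S, ¬ Q ∣ F)).filter (fun F => ¬ Q ∣ F)) =
        (stpMon Fq k).filter (fun F => ∀ R ∈ insert Q S, ¬ R ∣ F) := by
      ext F
      simp only [Finset.mem_filter, Finset.mem_insert, forall_eq_or_imp]
      tauto
    rw [e1]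
    have e2 : ∑ F ∈ ((stpMon Fq k).filter (fun F => ∀ Q ∈ S, ¬ Q ∣ F)).filter (fun F => Q ∣ F), w F =
        w Q * (if Q.natDegree ≤ k then ∑ F ∈ (stpMon Fq (k - Q.natDegree)).filter (fun F => ∀ Q ∈ S, ¬ Q ∣ F), w F else 0) := by
      split_ifs with hk
      · rw [Finset.mul_sum]
        symm
        apply Finset.sum_nbij (fun F => Q * F)
        · intro F hF
          simp only [Finset.mem_filter, stp_mem_mon] at hF ⊢
          refine ⟨⟨⟨hQ.1.mul hF.1.1, ?_⟩, ?_⟩, dvd_mul_right _ _⟩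
          · rw [hQ.1.natDegree_mul hF.1.1]; omega
          · intro R hR hd
            have hR' := hS R (Finset.mem_insert_of_mem hR)
            rcases hR'.2.prime.dvd_or_dvd hd with h | h
            · have := eq_of_monic_of_associated hR'.1 hQ.1 (hR'.2.associated_of_dvd hQ.2 h)
              rw [this] at hR; exact ha hR
            · exact hF.2 R hR h
        · intro F _ G _ h
          exact mul_left_cancel₀ hQ.1.ne_zero h
        · intro F hF
          simp only [Finset.mem_coe, Finset.mem_filter, stp_mem_mon] at hF
          obtain ⟨⟨⟨h1, h2⟩, h3⟩, G, rfl⟩ := hF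
          have hG : G.Monic := hQ.1.of_mul_monic_left h1
          refine ⟨G, ?_, rfl⟩
          simp only [Finset.mem_coe, Finset.mem_filter, stp_mem_mon]
          refine ⟨⟨hG, ?_⟩, fun R hR hd => h3 R hR (hd.mul_left _)⟩
          rw [hQ.1.natDegree_mul hG] at h2; omega
        · intro F _; rw [hw]
      · rw [mul_zero]
        apply Finset.sum_eq_zero
        intro F hF
        simp only [Finset.mem_filter, stp_mem_mon] at hF
        exfalso
        apply hk
        rw [← hF.1.1.2]
        exact natDegree_le_of_dvd hF.2 hF.1.1.1.ne_zero
    rw [e2]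
    ring

theorem stp_sieve_le {Fq : Type*} [Field Fq] [Fintype Fq] (w : Fq[X] → ℝ) (hw : ∀ F G, w (F * G) = w F * w G)
    (hw1 : w 1 = 1) (N : ℕ) (L : ℝ[X]) (hL : ∀ k ≤ N, L.coeff k = ∑ F ∈ stpMon Fq k, w F) :
    X ^ (N + 1) ∣ stpE (fun Q => - w Q) (stpIrrLe Fq N) * L - 1 := by
  rw [X_pow_dvd_iff]
  intro k hk
  have hS : ∀ Q ∈ stpIrrLe Fq N, Q.Monic ∧ Irreducible Q := by
    intro Q hQ; rw [stp_mem_irrLe] at hQ; exact ⟨hQ.1, hQ.2.1⟩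
  have h1 := congrArg (PowerSeries.coeff k) (stp_sieve w hw (stpIrrLe Fq N) hS)
  rw [PowerSeries.coeff_mul, PowerSeries.coeff_mk] at h1
  rw [coeff_sub, coeff_mul, coeff_one]
  have h2 : ∑ x ∈ Finset.HasAntidiagonal.antidiagonal k, (stpE (fun Q => -w Q) (stpIrrLe Fq N)).coeff x.1 * L.coeff x.2 =
      ∑ F ∈ (stpMon Fq k).filter (fun F => ∀ Q ∈ stpIrrLe Fq N, ¬ Q ∣ F), w F := by
    rw [← h1]
    apply Finset.sum_congr rfl
    intro x hx
    rw [Finset.HasAntidiagonal.mem_antidiagonal] at hx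
    rw [coeff_coe, PowerSeries.coeff_mk, hL _ (by omega)]
  rw [h2]
  have h3 : (stpMon Fq k).filter (fun F => ∀ Q ∈ stpIrrLe Fq N, ¬ Q ∣ F) = if k = 0 then {1} else ∅ := by
    ext F
    rw [Finset.mem_filter, stp_mem_mon]
    constructor
    · rintro ⟨⟨h4, h5⟩, h6⟩
      have hk0 : k = 0 := by
        by_contra hk0
        have hnu : ¬ IsUnit F := by
          intro hu
          have := natDegree_eq_zero_of_isUnit hu
          omega
        obtain ⟨Q, hQm, hQi, hQd⟩ := exists_monic_irreducible_factor F hnu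
        refine h6 Q ?_ hQd
        rw [stp_mem_irrLe]
        refine ⟨hQm, hQi, ?_⟩
        have := natDegree_le_of_dvd hQd h4.ne_zero
        omega
      rw [if_pos hk0, Finset.mem_singleton]
      exact eq_one_of_monic_natDegree_zero h4 (by omega)
    · intro h
      split_ifs at h with hk0
      · rw [Finset.mem_singleton] at h
        subst h
        refine ⟨⟨monic_one, by simp [hk0]⟩, fun Q hQ hd => ?_⟩
        rw [stp_mem_irrLe] at hQ
        exact hQ.2.1.not_isUnit (isUnit_of_dvd_one hd)
      · simp at h
  rw [h3]
  split_ifs <;> simp [hw1]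

open Polynomial Classical

noncomputable section

def stpV {Fq : Type*} [Field Fq] [Fintype Fq] (e1 e2 : ℤ) (P Q : Fq[X]) : ℝ :=
  (aQ e1 e2 P Q : ℝ) / ((Fintype.card Fq : ℝ) ^ Q.natDegree + 1)

def stpC {Fq : Type*} [Field Fq] [Fintype Fq] (e1 e2 : ℤ) (P : Fq[X]) (k : ℕ) : ℝ :=
  (stpE (stpV e1 e2 P) (stpIrrLe Fq k)).coeff k

def stpW {Fq : Type*} [Field Fq] [Fintype Fq] (e : ℤ) (P F : Fq[X]) : ℝ :=
  (e : ℝ) ^ F.natDegree * (chiP P F : ℝ) * ((Fintype.card Fq : ℝ)⁻¹) ^ F.natDegree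

def stpL {Fq : Type*} [Field Fq] [Fintype Fq] (e : ℤ) (P : Fq[X]) : ℝ[X] :=
  ∑ j ∈ Finset.range P.natDegree, C (∑ F ∈ stpMon Fq j, stpW e P F) * X ^ j

end

theorem stp_irr_disj {Fq : Type*} [Field Fq] [Fintype Fq] (s : Set ℕ) : s.PairwiseDisjoint (stpIrr Fq) := by
  intro a _ b _ hab
  rw [Function.onFun, Finset.disjoint_left]
  intro Q h1 h2
  rw [stp_mem_irr] at h1 h2
  exact hab (h1.2.2.symm.trans h2.2.2)

theorem stp_sum_irrLe {Fq : Type*} [Field Fq] [Fintype Fq] (N : ℕ) (g : Fq[X] → ℝ) :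
    ∑ Q ∈ stpIrrLe Fq N, g Q = ∑ d ∈ Finset.range (N + 1), ∑ Q ∈ stpIrr Fq d, g Q :=
  Finset.sum_biUnion (stp_irr_disj _)

theorem stp_prod_irrLe {Fq : Type*} [Field Fq] [Fintype Fq] (N : ℕ) (g : Fq[X] → ℝ) :
    ∏ Q ∈ stpIrrLe Fq N, g Q = ∏ d ∈ Finset.range (N + 1), ∏ Q ∈ stpIrr Fq d, g Q :=
  Finset.prod_biUnion (stp_irr_disj _)

theorem stp_irrLe_irr {Fq : Type*} [Field Fq] [Fintype Fq] (N : ℕ) :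
    ∀ Q ∈ stpIrrLe Fq N, Q.Monic ∧ Irreducible Q := by
  intro Q hQ; rw [stp_mem_irrLe] at hQ; exact ⟨hQ.1, hQ.2.1⟩

theorem stp_abs_e (e : ℤ) (he : e = 1 ∨ e = -1) (k : ℕ) : |(e : ℝ) ^ k| ≤ 1 := by
  rcases he with h | h <;> simp [h]

theorem stp_W_mul {Fq : Type*} [Field Fq] [Fintype Fq] (e : ℤ) (P : Fq[X]) (hP : P.Monic) (hi : Irreducible P)
    (F G : Fq[X]) : stpW e P (F * G) = stpW e P F * stpW e P G := by
  by_cases h : F = 0 ∨ G = 0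
  · have h0 : stpW e P 0 = 0 := by simp [stpW, chiP]
    rcases h with h | h <;> simp [h, h0]
  · push Not at h
    rw [stpW, stpW, stpW, natDegree_mul h.1 h.2, stp_chi_mul P hP hi]
    push_cast
    ring

theorem stp_W_one {Fq : Type*} [Field Fq] [Fintype Fq] (e : ℤ) (P : Fq[X]) (hP : P.Monic) (hi : Irreducible P) :
    stpW e P 1 = 1 := by
  simp [stpW, stp_chi_one P hP hi]

theorem stp_W_abs {Fq : Type*} [Field Fq] [Fintype Fq] (e : ℤ) (he : e = 1 ∨ e = -1) (P F : Fq[X]) :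
    |stpW e P F| ≤ ((Fintype.card Fq : ℝ)⁻¹) ^ F.natDegree := by
  rw [stpW, abs_mul, abs_mul, abs_of_nonneg (a := ((Fintype.card Fq : ℝ)⁻¹) ^ F.natDegree) (by positivity)]
  have := mul_le_one₀ (stp_abs_e e he F.natDegree) (abs_nonneg _) (stp_chi_abs P F)
  exact mul_le_of_le_one_left (by positivity) this

theorem stp_L_coeff {Fq : Type*} [Field Fq] [Fintype Fq] (hodd : Odd (Fintype.card Fq)) (e : ℤ)
    (P : Fq[X]) (hP : P.Monic) (hi : Irreducible P) (k : ℕ) :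
    (stpL e P).coeff k = ∑ F ∈ stpMon Fq k, stpW e P F := by
  rw [stpL, finsetSum_coeff]
  simp only [coeff_C_mul_X_pow]
  rw [Finset.sum_ite_eq]
  split_ifs with h
  · rfl
  · rw [Finset.mem_range, not_lt] at h
    have h1 : ∀ F ∈ stpMon Fq k, stpW e P F = (e : ℝ) ^ k * ((Fintype.card Fq : ℝ)⁻¹) ^ k * (chiP P F : ℝ) := by
      intro F hF
      rw [stp_mem_mon] at hF
      rw [stpW, hF.2]; ring
    rw [Finset.sum_congr rfl h1, ← Finset.mul_sum]
    have := stp_chi_sum hodd P hP hi k h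
    have h2 : ∑ F ∈ stpMon Fq k, (chiP P F : ℝ) = 0 := by exact_mod_cast this
    rw [h2, mul_zero]

theorem stp_L_dom {Fq : Type*} [Field Fq] [Fintype Fq] (e : ℤ) (he : e = 1 ∨ e = -1) (P : Fq[X]) :
    stpDom (stpL e P) (∑ j ∈ Finset.range P.natDegree, C 1 * X ^ j) := by
  intro k
  rw [stpL, finsetSum_coeff, finsetSum_coeff]
  refine (Finset.abs_sum_le_sum_abs _ _).trans (Finset.sum_le_sum fun j _ => ?_)
  refine stp_dom_mono ?_ j k
  refine (Finset.abs_sum_le_sum_abs _ _).trans ?_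
  have hq : (0 : ℝ) < Fintype.card Fq := by exact_mod_cast Fintype.card_pos
  calc _ ≤ ∑ F ∈ stpMon Fq j, ((Fintype.card Fq : ℝ)⁻¹) ^ j := by
        apply Finset.sum_le_sum
        intro F hF
        rw [stp_mem_mon] at hF
        rw [← hF.2]
        exact stp_W_abs e he P F
    _ = 1 := by
        rw [Finset.sum_const, stp_card_mon, nsmul_eq_mul]
        push_cast
        rw [← mul_pow, mul_inv_cancel₀ hq.ne', one_pow]

theorem stp_V_eq {Fq : Type*} [Field Fq] [Fintype Fq] (e1 e2 : ℤ) (P Q : Fq[X]) :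
    ∃ x y : ℝ, ((e1 = 1 ∨ e1 = -1) → |x| ≤ 1) ∧ ((e2 = 1 ∨ e2 = -1) → |y| ≤ 1) ∧ (aQ e1 e2 P Q : ℝ) = x + y ∧
     stpV e1 e2 P Q = (x + y) / ((Fintype.card Fq : ℝ) ^ Q.natDegree + 1) ∧
     stpW e1 P Q = x * ((Fintype.card Fq : ℝ)⁻¹) ^ Q.natDegree ∧
     stpW e2 P Q = y * ((Fintype.card Fq : ℝ)⁻¹) ^ Q.natDegree := by
  refine ⟨(e1 : ℝ) ^ Q.natDegree * (chiP P Q : ℝ), (e2 : ℝ) ^ Q.natDegree * (chiP P Q : ℝ), ?_, ?_, ?_, ?_, rfl, rfl⟩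
  · intro h
    rw [abs_mul]
    exact mul_le_one₀ (stp_abs_e e1 h _) (abs_nonneg _) (stp_chi_abs P Q)
  · intro h
    rw [abs_mul]
    exact mul_le_one₀ (stp_abs_e e2 h _) (abs_nonneg _) (stp_chi_abs P Q)
  · rw [aQ]; push_cast; ring
  · rw [stpV, aQ]; push_cast; ring

theorem stp_V_abs {Fq : Type*} [Field Fq] [Fintype Fq] (e1 e2 : ℤ) (he1 : e1 = 1 ∨ e1 = -1)
    (he2 : e2 = 1 ∨ e2 = -1) (P Q : Fq[X]) :
    |stpV e1 e2 P Q| ≤ 2 / ((Fintype.card Fq : ℝ) ^ Q.natDegree + 1) := by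
  obtain ⟨x, y, hx, hy, h0, h1, h2, h3⟩ := stp_V_eq e1 e2 P Q
  rw [h1, abs_div, abs_of_pos (a := (Fintype.card Fq : ℝ) ^ Q.natDegree + 1) (by positivity)]
  have : |x + y| ≤ 2 := (abs_add_le x y).trans (by linarith [hx he1, hy he2])
  gcongr

theorem stp_V_abs2 {Fq : Type*} [Field Fq] [Fintype Fq] (e1 e2 : ℤ) (he1 : e1 = 1 ∨ e1 = -1)
    (he2 : e2 = 1 ∨ e2 = -1) (P Q : Fq[X]) :
    |stpV e1 e2 P Q| ≤ 2 * ((Fintype.card Fq : ℝ)⁻¹) ^ Q.natDegree := by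
  refine (stp_V_abs e1 e2 he1 he2 P Q).trans ?_
  have hq : (0 : ℝ) < Fintype.card Fq := by exact_mod_cast Fintype.card_pos
  rw [inv_pow, ← div_eq_mul_inv]
  gcongr
  linarith

theorem stp_C_abs {Fq : Type*} [Field Fq] [Fintype Fq] (e1 e2 : ℤ) (he1 : e1 = 1 ∨ e1 = -1)
    (he2 : e2 = 1 ∨ e2 = -1) (P : Fq[X]) (k N : ℕ) :
    |(stpE (stpV e1 e2 P) (stpIrrLe Fq N)).coeff k| ≤ k + 1 :=
  stp_E_two _ _ (stp_irrLe_irr N) (fun Q _ => stp_V_abs2 e1 e2 he1 he2 P Q) k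

theorem stp_factor (m x y : ℝ) (hm : 1 ≤ m) (hx : |x| ≤ 1) (hy : |y| ≤ 1) (d : ℕ) :
    stpDom ((1 + C ((x + y) / (m + 1)) * X ^ d) * (1 + C (-(x * m⁻¹)) * X ^ d) * (1 + C (-(y * m⁻¹)) * X ^ d))
      (1 + C (2 * m⁻¹ ^ 2) * X ^ d + C (5 * m⁻¹ ^ 2) * X ^ (2 * d) + C (2 * m⁻¹ ^ 3) * X ^ (3 * d)) := by
  set a := (x + y) / (m + 1) with ha
  set w1 := x * m⁻¹ with hw1
  set w2 := y * m⁻¹ with hw2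
  have e : (1 + C a * X ^ d) * (1 + C (-w1) * X ^ d) * (1 + C (-w2) * X ^ d) =
    1 + C (a - w1 - w2) * X ^ d + C (w1 * w2 - a * (w1 + w2)) * X ^ (2 * d) + C (a * w1 * w2) * X ^ (3 * d) := by
    simp only [C_mul, C_sub, C_neg, C_add]
    ring
  rw [e]
  have hm0 : 0 < m := by linarith
  have hi : 0 < m⁻¹ := by positivity
  have hxy : |x + y| ≤ 2 := (abs_add_le x y).trans (by linarith)
  have ba : |a| ≤ 2 * m⁻¹ := by
    rw [ha, abs_div, abs_of_pos (a := m + 1) (by linarith), ← div_eq_mul_inv]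
    gcongr
    linarith
  have b1 : |w1| ≤ m⁻¹ := by
    rw [hw1, abs_mul, abs_of_pos hi]; exact mul_le_of_le_one_left hi.le hx
  have b2 : |w2| ≤ m⁻¹ := by
    rw [hw2, abs_mul, abs_of_pos hi]; exact mul_le_of_le_one_left hi.le hy
  have b12 : |w1 * w2| ≤ m⁻¹ ^ 2 := by
    rw [abs_mul, sq]; exact mul_le_mul b1 b2 (abs_nonneg _) hi.le
  refine stp_dom_add (stp_dom_add (stp_dom_add stp_dom_one (stp_dom_mono ?_ _)) (stp_dom_mono ?_ _)) (stp_dom_mono ?_ _)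
  · have : a - w1 - w2 = -((x + y) * (m⁻¹ * (m + 1)⁻¹)) := by
      rw [ha, hw1, hw2]; field_simp; ring
    rw [this, abs_neg, abs_mul, abs_of_pos (a := m⁻¹ * (m + 1)⁻¹) (by positivity)]
    have h2 : (m + 1)⁻¹ ≤ m⁻¹ := by gcongr; linarith
    rw [sq]
    gcongr
  · have h3 : |a * (w1 + w2)| ≤ 2 * m⁻¹ * (2 * m⁻¹) := by
      rw [abs_mul]
      exact mul_le_mul ba ((abs_add_le _ _).trans (by linarith)) (abs_nonneg _) (by positivity)
    refine (abs_sub _ _).trans ?_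
    nlinarith
  · rw [mul_assoc, abs_mul]
    calc |a| * |w1 * w2| ≤ 2 * m⁻¹ * m⁻¹ ^ 2 := mul_le_mul ba b12 (abs_nonneg _) (by positivity)
      _ = _ := by ring

theorem stp_Gbar {Fq : Type*} [Field Fq] [Fintype Fq] (R : ℝ) (hR : 1 < R) (hR4 : R ^ 4 = Fintype.card Fq) (N : ℕ) :
    ∏ Q ∈ stpIrrLe Fq N, (1 + C (2 * ((Fintype.card Fq : ℝ) ^ Q.natDegree)⁻¹ ^ 2) * X ^ Q.natDegree
      + C (5 * ((Fintype.card Fq : ℝ) ^ Q.natDegree)⁻¹ ^ 2) * X ^ (2 * Q.natDegree)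
      + C (2 * ((Fintype.card Fq : ℝ) ^ Q.natDegree)⁻¹ ^ 3) * X ^ (3 * Q.natDegree) : ℝ[X]).eval R
      ≤ Real.exp (9 * (1 - (R ^ 2)⁻¹)⁻¹) := by
  have hR0 : 0 < R := by linarith
  have h1 : ∀ Q ∈ stpIrrLe Fq N, (1 + C (2 * ((Fintype.card Fq : ℝ) ^ Q.natDegree)⁻¹ ^ 2) * X ^ Q.natDegree
      + C (5 * ((Fintype.card Fq : ℝ) ^ Q.natDegree)⁻¹ ^ 2) * X ^ (2 * Q.natDegree)
      + C (2 * ((Fintype.card Fq : ℝ) ^ Q.natDegree)⁻¹ ^ 3) * X ^ (3 * Q.natDegree) : ℝ[X]).eval R ≤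
      Real.exp (9 * ((R ^ 6)⁻¹) ^ Q.natDegree) := by
    intro Q _
    simp only [eval_add, eval_one, eval_mul, eval_C, eval_pow, eval_X]
    set d := Q.natDegree
    set r := R ^ d with hr
    have hr1 : 1 ≤ r := one_le_pow₀ hR.le
    have hr0 : 0 < r := by linarith
    have e1 : (Fintype.card Fq : ℝ) ^ d = r ^ 4 := by rw [← hR4, hr]; ring
    have e2 : ((R ^ 6)⁻¹) ^ d = (r ^ 6)⁻¹ := by rw [hr, inv_pow]; ring
    have e3 : R ^ (2 * d) = r ^ 2 := by rw [hr]; ring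
    have e4 : R ^ (3 * d) = r ^ 3 := by rw [hr]; ring
    rw [e1, e2, e3, e4]
    have f1 : (r ^ 4)⁻¹ ^ 2 * r ≤ (r ^ 6)⁻¹ := by
      have : (r ^ 4)⁻¹ ^ 2 * r = (r ^ 7)⁻¹ := by field_simp
      rw [this]
      gcongr
      norm_num
    have f2 : (r ^ 4)⁻¹ ^ 2 * r ^ 2 = (r ^ 6)⁻¹ := by field_simp
    have f3 : (r ^ 4)⁻¹ ^ 3 * r ^ 3 ≤ (r ^ 6)⁻¹ := by
      have : (r ^ 4)⁻¹ ^ 3 * r ^ 3 = (r ^ 9)⁻¹ := by field_simp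
      rw [this]
      gcongr
      norm_num
    have := Real.add_one_le_exp (9 * (r ^ 6)⁻¹)
    linarith
  refine (Finset.prod_le_prod ?_ h1).trans ?_
  · intro Q _
    simp only [eval_add, eval_one, eval_mul, eval_C, eval_pow, eval_X]
    positivity
  · rw [← Real.exp_sum, Real.exp_le_exp, stp_sum_irrLe]
    have g1 : (R ^ 2)⁻¹ < 1 := inv_lt_one_of_one_lt₀ (one_lt_pow₀ hR (by norm_num))
    have g0 : 0 ≤ (R ^ 2)⁻¹ := by positivity
    rw [← tsum_geometric_of_lt_one g0 g1, ← tsum_mul_left]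
    refine le_trans ?_ (Summable.sum_le_tsum (Finset.range (N + 1)) (fun i _ => by positivity)
      ((summable_geometric_of_lt_one g0 g1).mul_left 9))
    apply Finset.sum_le_sum
    intro d _
    have h2 : ∀ Q ∈ stpIrr Fq d, 9 * ((R ^ 6)⁻¹) ^ Q.natDegree = 9 * ((R ^ 6)⁻¹) ^ d := by
      intro Q hQ
      rw [((stp_mem_irr d Q).mp hQ).2.2]
    rw [Finset.sum_congr rfl h2, Finset.sum_const, nsmul_eq_mul]
    have h3 : ((stpIrr Fq d).card : ℝ) ≤ (R ^ 4) ^ d := by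
      rw [hR4]; exact_mod_cast stp_card_irr_le d
    calc _ ≤ (R ^ 4) ^ d * (9 * (R ^ 6)⁻¹ ^ d) := by gcongr
      _ = 9 * (R ^ 4 * (R ^ 6)⁻¹) ^ d := by rw [mul_pow]; ring
      _ = 9 * ((R ^ 2)⁻¹) ^ d := by
        congr 2
        field_simp

theorem stp_tail {Fq : Type*} [Field Fq] [Fintype Fq] (hodd : Odd (Fintype.card Fq)) (R : ℝ) (hR : 1 < R)
    (hR4 : R ^ 4 = Fintype.card Fq) (e1 e2 : ℤ) (he1 : e1 = 1 ∨ e1 = -1)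
    (he2 : e2 = 1 ∨ e2 = -1) (P : Fq[X]) (hP : P.Monic) (hi : Irreducible P) (k : ℕ) :
    |stpC e1 e2 P k| * R ^ k ≤ Real.exp (9 * (1 - (R ^ 2)⁻¹)⁻¹) * (P.natDegree * R ^ P.natDegree) ^ 2 := by
  have hR0 : 0 < R := by linarith
  have hq1 : (1 : ℝ) ≤ Fintype.card Fq := by exact_mod_cast Fintype.card_pos
  set S := stpIrrLe Fq k
  set Dk := stpE (stpV e1 e2 P) S with hD
  set E1 := stpE (fun Q => - stpW e1 P Q) S with hE1
  set E2 := stpE (fun Q => - stpW e2 P Q) S with hE2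
  have d1 : X ^ (k + 1) ∣ E1 * stpL e1 P - 1 :=
    stp_sieve_le (stpW e1 P) (stp_W_mul e1 P hP hi) (stp_W_one e1 P hP hi) k _
      (fun j _ => stp_L_coeff hodd e1 P hP hi j)
  have d2 : X ^ (k + 1) ∣ E2 * stpL e2 P - 1 :=
    stp_sieve_le (stpW e2 P) (stp_W_mul e2 P hP hi) (stp_W_one e2 P hP hi) k _
      (fun j _ => stp_L_coeff hodd e2 P hP hi j)
  have d3 : X ^ (k + 1) ∣ (Dk * E1 * E2) * (stpL e1 P * stpL e2 P) - Dk := by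
    have : (Dk * E1 * E2) * (stpL e1 P * stpL e2 P) - Dk =
      (Dk * (E2 * stpL e2 P)) * (E1 * stpL e1 P - 1) + Dk * (E2 * stpL e2 P - 1) := by ring
    rw [this]
    exact dvd_add (d1.mul_left _) (d2.mul_left _)
  have d4 : stpC e1 e2 P k = ((Dk * E1 * E2) * (stpL e1 P * stpL e2 P)).coeff k := by
    have := (X_pow_dvd_iff.mp d3) k (by omega)
    rw [coeff_sub, sub_eq_zero] at this
    rw [this]; rfl
  have d5 : stpDom (Dk * E1 * E2) (∏ Q ∈ S, (1 + C (2 * ((Fintype.card Fq : ℝ) ^ Q.natDegree)⁻¹ ^ 2) * X ^ Q.natDegree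
      + C (5 * ((Fintype.card Fq : ℝ) ^ Q.natDegree)⁻¹ ^ 2) * X ^ (2 * Q.natDegree)
      + C (2 * ((Fintype.card Fq : ℝ) ^ Q.natDegree)⁻¹ ^ 3) * X ^ (3 * Q.natDegree) : ℝ[X])) := by
    rw [hD, hE1, hE2, stpE, stpE, stpE, ← Finset.prod_mul_distrib, ← Finset.prod_mul_distrib]
    apply stp_dom_prod
    intro Q _
    obtain ⟨x, y, hx, hy, h0, h1, h2, h3⟩ := stp_V_eq e1 e2 P Q
    rw [h1, h2, h3, inv_pow]
    exact stp_factor _ x y (one_le_pow₀ hq1) (hx he1) (hy he2) _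
  have d6 := stp_dom_mul d5 (stp_dom_mul (stp_L_dom e1 he1 P) (stp_L_dom e2 he2 P))
  have d7 := d6 k
  rw [← d4] at d7
  refine (mul_le_mul_of_nonneg_right d7 (by positivity)).trans ?_
  refine (stp_dom_eval (fun j => (abs_nonneg _).trans (d6 j)) R hR0.le k).trans ?_
  rw [eval_mul, eval_mul, eval_prod, ← sq]
  have g1 : (∑ j ∈ Finset.range P.natDegree, C 1 * X ^ j : ℝ[X]).eval R ≤ P.natDegree * R ^ P.natDegree := by
    rw [eval_finsetSum]
    simp only [eval_mul, eval_C, eval_pow, eval_X, one_mul]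
    calc _ ≤ ∑ j ∈ Finset.range P.natDegree, R ^ P.natDegree := by
          apply Finset.sum_le_sum
          intro j hj
          exact pow_le_pow_right₀ hR.le (Finset.mem_range.mp hj).le
      _ = _ := by simp
  have g0 : 0 ≤ (∑ j ∈ Finset.range P.natDegree, C 1 * X ^ j : ℝ[X]).eval R := by
    rw [eval_finsetSum]
    simp only [eval_mul, eval_C, eval_pow, eval_X, one_mul]
    positivity
  exact mul_le_mul (stp_Gbar R hR hR4 k) (pow_le_pow_left₀ g0 g1 2) (by positivity) (Real.exp_pos _).le

open Polynomial Classical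

theorem stp_abel_pos (c : ℕ → ℝ) (u : ℝ) (h0 : 0 ≤ u) (h1 : u ≤ 1)
    (h : ∀ N, 0 ≤ ∑ d ∈ Finset.range N, c d) (N : ℕ) :
    u ^ N * ∑ d ∈ Finset.range N, c d ≤ ∑ d ∈ Finset.range N, c d * u ^ d := by
  induction N with
  | zero => simp
  | succ N ih =>
    have h2 : u ^ (N + 1) ≤ u ^ N := pow_le_pow_of_le_one h0 h1 (Nat.le_succ N)
    have h3 := mul_le_mul_of_nonneg_right h2 (h (N + 1))
    refine h3.trans ?_
    rw [Finset.sum_range_succ, Finset.sum_range_succ, mul_add]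
    linarith

theorem stp_abel_le (b b' : ℕ → ℝ) (u : ℝ) (h0 : 0 ≤ u) (h1 : u ≤ 1)
    (h : ∀ N, ∑ d ∈ Finset.range N, b d ≤ ∑ d ∈ Finset.range N, b' d) (N : ℕ) :
    ∑ d ∈ Finset.range N, b d * u ^ d ≤ ∑ d ∈ Finset.range N, b' d * u ^ d := by
  have hh : ∀ N, 0 ≤ ∑ d ∈ Finset.range N, (b' d - b d) := by
    intro N; rw [Finset.sum_sub_distrib]; linarith [h N]
  have := stp_abel_pos (fun d => b' d - b d) u h0 h1 hh N
  have h2 : 0 ≤ u ^ N * ∑ d ∈ Finset.range N, (b' d - b d) := mul_nonneg (pow_nonneg h0 _) (hh N)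
  simp only [sub_mul, Finset.sum_sub_distrib] at this h2
  linarith

theorem stp_summ (b : ℕ → ℝ) (B : ℝ) (hb : ∀ d, |b d| ≤ B) (u : ℝ) (h0 : 0 ≤ u) (h1 : u < 1) :
    Summable fun d => b d * u ^ d := by
  refine Summable.of_norm_bounded (g := fun d => B * u ^ d) ((summable_geometric_of_lt_one h0 h1).mul_left B) ?_
  intro d
  rw [Real.norm_eq_abs, abs_mul, abs_of_nonneg (pow_nonneg h0 d)]
  exact mul_le_mul_of_nonneg_right (hb d) (pow_nonneg h0 d)

theorem stp_evt : ∀ᶠ u : ℝ in nhdsWithin 1 (Set.Iio 1), 0 ≤ u ∧ u < 1 := by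
  have : Set.Ioo (0 : ℝ) 1 ∈ nhdsWithin 1 (Set.Iio 1) := Ioo_mem_nhdsLT (by norm_num)
  filter_upwards [this] with u hu
  exact ⟨hu.1.le, hu.2⟩

theorem stp_abel (b : ℕ → ℝ) (B : ℝ) (hb : ∀ d, |b d| ≤ B) (α : ℝ)
    (h : Filter.Tendsto (fun N => Real.exp (∑ d ∈ Finset.range N, b d)) Filter.atTop (nhds α)) :
    Filter.Tendsto (fun u : ℝ => Real.exp (∑' d, b d * u ^ d)) (nhdsWithin 1 (Set.Iio 1)) (nhds α) := by
  have hα : 0 ≤ α := ge_of_tendsto' h fun N => (Real.exp_pos _).le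
  rcases hα.lt_or_eq with hpos | hzero
  · have h1 : Filter.Tendsto (fun N => ∑ d ∈ Finset.range N, b d) Filter.atTop (nhds (Real.log α)) := by
      have := (Real.continuousAt_log hpos.ne').tendsto.comp h
      simpa [Function.comp_def] using this
    have h2 := Real.tendsto_tsum_powerSeries_nhdsWithin_lt h1
    have h3 := (Real.continuous_exp.tendsto _).comp h2
    rw [Real.exp_log hpos] at h3
    exact h3
  · subst hzero
    rw [Real.tendsto_exp_comp_nhds_zero] at h
    rw [Real.tendsto_exp_comp_nhds_zero, Filter.tendsto_atBot]
    intro T0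
    set T : ℝ := min (T0 - 1) 0 with hT
    let S : ℕ → ℝ := fun N => max (∑ d ∈ Finset.range N, b d) T
    let b' : ℕ → ℝ := fun d => S (d + 1) - S d
    have hS : ∀ N, ∑ d ∈ Finset.range N, b' d = S N := by
      intro N
      rw [Finset.sum_range_sub]
      have : S 0 = 0 := by simp [S, hT]
      rw [this, sub_zero]
    have hb' : ∀ d, |b' d| ≤ B := by
      intro d
      refine le_trans (abs_max_sub_max_le_abs _ _ _) ?_
      rw [Finset.sum_range_succ, add_sub_cancel_left]
      exact hb d
    have h1 : Filter.Tendsto (fun N => ∑ d ∈ Finset.range N, b' d) Filter.atTop (nhds T) := by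
      simp only [hS]
      apply tendsto_const_nhds.congr'
      filter_upwards [h.eventually_le_atBot T] with N hN
      exact (max_eq_right hN).symm
    have h2 := Real.tendsto_tsum_powerSeries_nhdsWithin_lt h1
    have hlt : T < T0 := lt_of_le_of_lt (min_le_left _ _) (by linarith)
    filter_upwards [h2.eventually_le_const hlt, stp_evt] with u hu hu2
    refine le_trans ?_ hu
    refine le_of_tendsto_of_tendsto' (stp_summ b B hb u hu2.1 hu2.2).hasSum.tendsto_sum_nat
      (stp_summ b' B hb' u hu2.1 hu2.2).hasSum.tendsto_sum_nat ?_
    intro N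
    apply stp_abel_le b b' u hu2.1 hu2.2.le
    intro N
    rw [hS]; exact le_max_left _ _

theorem stp_abel_main (l : ℕ → ℝ → ℝ) (b r c : ℕ → ℝ) (B A : ℝ) (hb : ∀ d, |b d| ≤ B)
    (hr : Summable r) (hl : ∀ d, ∀ u ∈ Set.Icc (0 : ℝ) 1, |l d u - b d * u ^ d| ≤ r d)
    (hcont : ∀ d, ContinuousOn (l d) (Set.Icc 0 1)) (hc : Summable fun k => |c k|)
    (h1 : ∀ u : ℝ, 0 ≤ u → u < 1 → Filter.Tendsto (fun N => Real.exp (∑ d ∈ Finset.range N, l d u))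
      Filter.atTop (nhds (∑' k, c k * u ^ k)))
    (h2 : Filter.Tendsto (fun N => Real.exp (∑ d ∈ Finset.range N, l d 1)) Filter.atTop (nhds A)) :
    A = ∑' k, c k := by
  let ρ : ℝ → ℝ := fun u => ∑' d, (l d u - b d * u ^ d)
  have hρc : ContinuousOn ρ (Set.Icc 0 1) := by
    apply continuousOn_tsum (u := r)
    · intro d
      exact (hcont d).sub (by fun_prop)
    · exact hr
    · intro d u hu; exact hl d u hu
  have hρs : ∀ u ∈ Set.Icc (0 : ℝ) 1, Filter.Tendsto (fun N => ∑ d ∈ Finset.range N, (l d u - b d * u ^ d))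
      Filter.atTop (nhds (ρ u)) := by
    intro u hu
    apply HasSum.tendsto_sum_nat
    apply Summable.hasSum
    exact Summable.of_norm_bounded hr fun d => hl d u hu
  have hB : Filter.Tendsto (fun N => Real.exp (∑ d ∈ Finset.range N, b d)) Filter.atTop
      (nhds (A * Real.exp (-ρ 1))) := by
    have h3 := h2.mul (((Real.continuous_exp.tendsto _).comp (hρs 1 (by simp)).neg))
    refine h3.congr fun N => ?_
    simp only [Function.comp, ← Real.exp_add]
    congr 1
    rw [Finset.sum_sub_distrib]; simp
  have h4 := stp_abel b B hb _ hB
  have hρ1 : Filter.Tendsto ρ (nhdsWithin 1 (Set.Iio 1)) (nhds (ρ 1)) := by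
    have h5 := hρc 1 (by simp)
    refine h5.mono_left ?_
    rw [nhdsWithin_le_iff]
    filter_upwards [stp_evt] with u hu
    exact ⟨hu.1, hu.2.le⟩
  have h5 := h4.mul ((Real.continuous_exp.tendsto _).comp hρ1)
  have h6 : A * Real.exp (-ρ 1) * Real.exp (ρ 1) = A := by
    rw [mul_assoc, ← Real.exp_add]; simp
  rw [h6] at h5
  have h7 : Filter.Tendsto (fun u : ℝ => ∑' k, c k * u ^ k) (nhdsWithin 1 (Set.Iio 1)) (nhds A) := by
    refine h5.congr' ?_
    filter_upwards [stp_evt] with u hu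
    refine tendsto_nhds_unique ?_ (h1 u hu.1 hu.2)
    have h8 := (Real.continuous_exp.tendsto _).comp
      ((stp_summ b B hb u hu.1 hu.2).hasSum.tendsto_sum_nat.add (hρs u ⟨hu.1, hu.2.le⟩))
    rw [Real.exp_add] at h8
    refine h8.congr fun N => ?_
    simp only [Function.comp]
    congr 1
    rw [Finset.sum_sub_distrib]; ring
  have h8 := Real.tendsto_tsum_powerSeries_nhdsWithin_lt (hc.of_abs.hasSum.tendsto_sum_nat)
  exact tendsto_nhds_unique h7 h8

open Polynomial Classical

theorem stp_eval_tsum (f : ℝ[X]) (u : ℝ) : f.eval u = ∑' k, f.coeff k * u ^ k := by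
  rw [eval_eq_sum_range, tsum_eq_sum]
  intro k hk
  rw [Finset.mem_range, not_lt] at hk
  rw [coeff_eq_zero_of_natDegree_lt (by omega), zero_mul]

theorem stp_tannery (f : ℕ → ℝ[X]) (g bound : ℕ → ℝ) (u : ℝ) (hu : 0 ≤ u) (hb : Summable bound)
    (h1 : ∀ N k, |(f N).coeff k| * u ^ k ≤ bound k) (h2 : ∀ N k, k ≤ N → (f N).coeff k = g k) :
    Filter.Tendsto (fun N => (f N).eval u) Filter.atTop (nhds (∑' k, g k * u ^ k)) := by
  simp only [stp_eval_tsum]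
  apply tendsto_tsum_of_dominated_convergence hb
  · intro k
    apply tendsto_const_nhds.congr'
    filter_upwards [Filter.eventually_ge_atTop k] with N hN
    rw [h2 N k hN]
  · filter_upwards with N
    intro k
    rw [Real.norm_eq_abs, abs_mul, abs_of_nonneg (pow_nonneg hu k)]
    exact h1 N k

theorem stp_zeta {Fq : Type*} [Field Fq] [Fintype Fq] (t : ℝ) (ht : t = (Fintype.card Fq : ℝ)⁻¹) :
    Filter.Tendsto (fun N => ∏ Q ∈ stpIrrLe Fq N, (1 - (t ^ 2) ^ Q.natDegree)) Filter.atTop (nhds (1 - t)) := by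
  have hq : (1 : ℝ) < Fintype.card Fq := by exact_mod_cast Fintype.one_lt_card
  have ht0 : 0 ≤ t := by rw [ht]; positivity
  have ht1 : t < 1 := by rw [ht]; exact inv_lt_one_of_one_lt₀ hq
  let w : Fq[X] → ℝ := fun F => if F = 0 then 0 else (t ^ 2) ^ F.natDegree
  have hw : ∀ F G, w (F * G) = w F * w G := by
    intro F G
    by_cases hF : F = 0
    · simp [w, hF]
    by_cases hG : G = 0
    · simp [w, hG]
    simp only [w, mul_eq_zero, hF, hG, or_self, if_false]
    rw [natDegree_mul hF hG, pow_add]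
  have hw1 : w 1 = 1 := by simp [w]
  have hwk : ∀ k, ∑ F ∈ stpMon Fq k, w F = t ^ k := by
    intro k
    have : ∀ F ∈ stpMon Fq k, w F = (t ^ 2) ^ k := by
      intro F hF
      rw [stp_mem_mon] at hF
      simp only [w, if_neg hF.1.ne_zero, hF.2]
    rw [Finset.sum_congr rfl this, Finset.sum_const, stp_card_mon, nsmul_eq_mul]
    push_cast
    rw [← mul_pow]
    congr 1
    rw [ht]; field_simp
  have hL : ∀ N k, k ≤ N → (∑ j ∈ Finset.range (N + 1), C (t ^ j) * X ^ j : ℝ[X]).coeff k = ∑ F ∈ stpMon Fq k, w F := by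
    intro N k hk
    rw [hwk, finsetSum_coeff]
    simp only [coeff_C_mul_X_pow]
    rw [Finset.sum_ite_eq, if_pos (Finset.mem_range.mpr (by omega))]
  have hcoef : ∀ N k, k ≤ N → (stpE (fun Q => -w Q) (stpIrrLe Fq N)).coeff k = (1 - C t * X : ℝ[X]).coeff k := by
    intro N k hk
    have h1 := stp_sieve_le w hw hw1 N _ (hL N)
    set E := stpE (fun Q => -w Q) (stpIrrLe Fq N)
    set Lp := (∑ j ∈ Finset.range (N + 1), C (t ^ j) * X ^ j : ℝ[X]) with hLp
    have h2 : (1 - C t * X) * Lp = 1 - (C t * X) ^ (N + 1) := by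
      have : Lp = ∑ j ∈ Finset.range (N + 1), (C t * X) ^ j := by
        rw [hLp]; apply Finset.sum_congr rfl; intro j _; rw [mul_pow, C_pow]
      rw [this]
      exact mul_neg_geom_sum _ _
    have h3 : X ^ (N + 1) ∣ E - (1 - C t * X) := by
      have e : E - (1 - C t * X) = (1 - C t * X) * (E * Lp - 1) + E * (1 - (1 - C t * X) * Lp) := by ring
      rw [e, h2]
      refine dvd_add (h1.mul_left _) (Dvd.dvd.mul_left ?_ _)
      rw [sub_sub_cancel, mul_pow]
      exact dvd_mul_left _ _
    have := (X_pow_dvd_iff.mp h3) k (by omega)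
    rwa [coeff_sub, sub_eq_zero] at this
  have hbd : ∀ N k, |(stpE (fun Q => -w Q) (stpIrrLe Fq N)).coeff k| * 1 ^ k ≤ t ^ k := by
    intro N k
    rw [one_pow, mul_one]
    have h1 : stpDom (stpE (fun Q => -w Q) (stpIrrLe Fq N)) (stpE (fun Q => (t ^ 2) ^ Q.natDegree) (stpIrrLe Fq N)) := by
      apply stp_dom_prod
      intro Q hQ
      have hQ' := stp_irrLe_irr N Q hQ
      refine stp_dom_add stp_dom_one (stp_dom_mono ?_ _)
      simp only [w, if_neg hQ'.1.ne_zero]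
      rw [abs_neg, abs_of_nonneg (by positivity)]
    refine (h1 k).trans ((stp_E_le _ (by positivity) _ (stp_irrLe_irr N) k).trans_eq ?_)
    congr 1
    rw [ht]; field_simp
  have := stp_tannery (fun N => stpE (fun Q => -w Q) (stpIrrLe Fq N)) (fun k => (1 - C t * X : ℝ[X]).coeff k)
    (fun k => t ^ k) 1 zero_le_one (summable_geometric_of_lt_one ht0 ht1) hbd hcoef
  rw [← stp_eval_tsum] at this
  simp only [eval_sub, eval_one, eval_mul, eval_C, eval_X, mul_one] at this
  refine this.congr fun N => ?_
  rw [stpE, eval_prod]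
  apply Finset.prod_congr rfl
  intro Q hQ
  have hQ' := stp_irrLe_irr N Q hQ
  simp [w, hQ'.1.ne_zero]
  ring

theorem stp_delta {Fq : Type*} [Field Fq] [Fintype Fq] (e1 e2 : ℤ) (P Q : Fq[X]) :
    1 + deltaP (Fintype.card Fq) e1 e2 P Q =
    (1 - (((Fintype.card Fq : ℝ)⁻¹) ^ 2) ^ Q.natDegree) * (1 + stpV e1 e2 P Q) := by
  have hq : (0 : ℝ) < Fintype.card Fq := by exact_mod_cast Fintype.card_pos
  rw [deltaP, stpV]
  have hm : 0 < (Fintype.card Fq : ℝ) ^ Q.natDegree := by positivity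
  have e1 : ((Fintype.card Fq : ℝ)⁻¹ ^ 2) ^ Q.natDegree = (((Fintype.card Fq : ℝ) ^ Q.natDegree) ^ 2)⁻¹ := by
    rw [← pow_mul, inv_pow, ← pow_mul]; congr 2; ring
  have e2 : (Fintype.card Fq : ℝ) ^ (2 * Q.natDegree) = ((Fintype.card Fq : ℝ) ^ Q.natDegree) ^ 2 := by ring
  rw [e1, e2]
  set m := (Fintype.card Fq : ℝ) ^ Q.natDegree
  field_simp
  ring

theorem stp_log (x : ℝ) (hx : |x| ≤ 1 / 2) : |Real.log (1 + x) - x| ≤ 2 * |x| ^ 2 := by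
  have h := Real.abs_log_sub_add_sum_range_le (x := -x) (by rw [abs_neg]; linarith) 1
  rw [abs_neg] at h
  simp at h
  have e : Real.log (1 + x) - x = -x + Real.log (1 + x) := by ring
  rw [e]
  refine h.trans ?_
  rw [div_le_iff₀ (by linarith)]
  have : 0 ≤ x ^ 2 := sq_nonneg x
  have h2 : |x| ^ 2 = x ^ 2 := sq_abs x
  nlinarith [abs_nonneg x]

theorem stp_C_summable {Fq : Type*} [Field Fq] [Fintype Fq] (hodd : Odd (Fintype.card Fq)) (R : ℝ) (hR : 1 < R)
    (hR4 : R ^ 4 = Fintype.card Fq) (e1 e2 : ℤ) (he1 : e1 = 1 ∨ e1 = -1)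
    (he2 : e2 = 1 ∨ e2 = -1) (P : Fq[X]) (hP : P.Monic) (hi : Irreducible P) :
    Summable fun k => |stpC e1 e2 P k| := by
  have hR0 : 0 < R := by linarith
  refine Summable.of_nonneg_of_le (fun k => abs_nonneg _) (fun k => ?_)
    ((summable_geometric_of_lt_one (by positivity) (inv_lt_one_of_one_lt₀ hR)).mul_left
      (Real.exp (9 * (1 - (R ^ 2)⁻¹)⁻¹) * (P.natDegree * R ^ P.natDegree) ^ 2))
  rw [inv_pow, ← div_eq_mul_inv, le_div_iff₀ (by positivity)]
  exact stp_tail hodd R hR hR4 e1 e2 he1 he2 P hP hi k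

theorem stp_AP {Fq : Type*} [Field Fq] [Fintype Fq] (hodd : Odd (Fintype.card Fq)) (R : ℝ) (hR : 1 < R)
    (hR4 : R ^ 4 = Fintype.card Fq) (e1 e2 : ℤ) (he1 : e1 = 1 ∨ e1 = -1)
    (he2 : e2 = 1 ∨ e2 = -1) (P : Fq[X]) (hP : P.Monic) (hi : Irreducible P) (A : ℝ)
    (hA : Filter.Tendsto (fun M => ∏ Q ∈ stpIrrLe Fq M, (1 + deltaP (Fintype.card Fq) e1 e2 P Q))
      Filter.atTop (nhds A)) :
    A = (1 - (Fintype.card Fq : ℝ)⁻¹) * ∑' k, stpC e1 e2 P k := by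
  have hq : (3 : ℝ) ≤ Fintype.card Fq := by
    have h1 : 1 < Fintype.card Fq := Fintype.one_lt_card
    have h2 : 3 ≤ Fintype.card Fq := by
      obtain ⟨m, hm⟩ := hodd; omega
    exact_mod_cast h2
  set t := (Fintype.card Fq : ℝ)⁻¹ with ht
  have ht0 : 0 ≤ t := by positivity
  have ht1 : t < 1 := inv_lt_one_of_one_lt₀ (by linarith)
  have hz := stp_zeta (Fq := Fq) t ht
  have hne : (1 - t) ≠ 0 := by linarith
  -- bounds on V
  have hV : ∀ d, ∀ Q ∈ stpIrr Fq d, |stpV e1 e2 P Q| ≤ 1 / 2 := by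
    intro d Q hQ
    rw [stp_mem_irr] at hQ
    refine (stp_V_abs e1 e2 he1 he2 P Q).trans ?_
    have h1 : (3 : ℝ) ≤ (Fintype.card Fq : ℝ) ^ Q.natDegree :=
      hq.trans (le_self_pow₀ (by linarith) hQ.2.1.natDegree_pos.ne')
    rw [div_le_div_iff₀ (by linarith) (by norm_num)]
    linarith
  have hV2 : ∀ d, ∀ Q ∈ stpIrr Fq d, |stpV e1 e2 P Q| ≤ 2 * t ^ d := by
    intro d Q hQ
    rw [stp_mem_irr] at hQ
    have := stp_V_abs2 e1 e2 he1 he2 P Q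
    rwa [hQ.2.2] at this
  have hVu : ∀ d, ∀ Q ∈ stpIrr Fq d, ∀ u ∈ Set.Icc (0 : ℝ) 1, |stpV e1 e2 P Q * u ^ d| ≤ |stpV e1 e2 P Q| := by
    intro d Q _ u hu
    rw [abs_mul, abs_of_nonneg (pow_nonneg hu.1 d)]
    exact mul_le_of_le_one_right (abs_nonneg _) (pow_le_one₀ hu.1 hu.2)
  have hpos : ∀ d, ∀ Q ∈ stpIrr Fq d, ∀ u ∈ Set.Icc (0 : ℝ) 1, 0 < 1 + stpV e1 e2 P Q * u ^ d := by
    intro d Q hQ u hu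
    have := (hVu d Q hQ u hu).trans (hV d Q hQ)
    linarith [(abs_le.mp this).1]
  have hcard : ∀ d, ((stpIrr Fq d).card : ℝ) * t ^ d ≤ 1 := by
    intro d
    have h1 : ((stpIrr Fq d).card : ℝ) ≤ (Fintype.card Fq : ℝ) ^ d := by exact_mod_cast stp_card_irr_le d
    calc _ ≤ (Fintype.card Fq : ℝ) ^ d * t ^ d := by gcongr
      _ = 1 := by rw [← mul_pow, ht, mul_inv_cancel₀ (by linarith), one_pow]
  let l : ℕ → ℝ → ℝ := fun d u => ∑ Q ∈ stpIrr Fq d, Real.log (1 + stpV e1 e2 P Q * u ^ d)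
  have hexp : ∀ N, ∀ u ∈ Set.Icc (0 : ℝ) 1, Real.exp (∑ d ∈ Finset.range (N + 1), l d u) =
      (stpE (stpV e1 e2 P) (stpIrrLe Fq N)).eval u := by
    intro N u hu
    rw [stpE, eval_prod, stp_prod_irrLe, Real.exp_sum]
    apply Finset.prod_congr rfl
    intro d _
    rw [Real.exp_sum]
    apply Finset.prod_congr rfl
    intro Q hQ
    rw [Real.exp_log (hpos d Q hQ u hu), ((stp_mem_irr d Q).mp hQ).2.2]
    simp
  have hmain := stp_abel_main l (fun d => ∑ Q ∈ stpIrr Fq d, stpV e1 e2 P Q) (fun d => 8 * t ^ d)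
    (stpC e1 e2 P) 2 (A / (1 - t)) ?_ ((summable_geometric_of_lt_one ht0 ht1).mul_left 8) ?_ ?_
    (stp_C_summable hodd R hR hR4 e1 e2 he1 he2 P hP hi) ?_ ?_
  · rw [← hmain]; field_simp
  · intro d
    refine (Finset.abs_sum_le_sum_abs _ _).trans ((Finset.sum_le_sum (hV2 d)).trans ?_)
    rw [Finset.sum_const, nsmul_eq_mul]
    linarith [hcard d]
  · intro d u hu
    simp only [l]
    rw [Finset.sum_mul, ← Finset.sum_sub_distrib]
    refine (Finset.abs_sum_le_sum_abs _ _).trans ?_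
    have h1 : ∀ Q ∈ stpIrr Fq d, |Real.log (1 + stpV e1 e2 P Q * u ^ d) - stpV e1 e2 P Q * u ^ d| ≤
        8 * (t ^ d * t ^ d) := by
      intro Q hQ
      have h2 := (hVu d Q hQ u hu).trans (hV d Q hQ)
      have h3 := (hVu d Q hQ u hu).trans (hV2 d Q hQ)
      refine (stp_log _ h2).trans ?_
      have h4 := pow_le_pow_left₀ (abs_nonneg _) h3 2
      linarith
    refine (Finset.sum_le_sum h1).trans ?_
    rw [Finset.sum_const, nsmul_eq_mul]
    have := mul_le_mul_of_nonneg_right (hcard d) (pow_nonneg ht0 d)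
    linarith
  · intro d
    apply continuousOn_finsetSum
    intro Q hQ
    apply ContinuousOn.log
    · fun_prop
    · intro u hu; exact (hpos d Q hQ u hu).ne'
  · intro u hu0 hu1
    rw [← Filter.tendsto_add_atTop_iff_nat 1]
    have hs : Summable fun k : ℕ => ((k : ℝ) + 1) * u ^ k := by
      have h1 := summable_pow_mul_geometric_of_norm_lt_one 1 (r := u) (by rw [Real.norm_eq_abs, abs_of_nonneg hu0]; exact hu1)
      have h2 := summable_geometric_of_lt_one hu0 hu1
      refine (h1.add h2).congr fun k => ?_
      ring
    have := stp_tannery (fun N => stpE (stpV e1 e2 P) (stpIrrLe Fq N)) (stpC e1 e2 P)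
      (fun k => ((k : ℝ) + 1) * u ^ k) u hu0 hs
      (fun N k => mul_le_mul_of_nonneg_right (stp_C_abs e1 e2 he1 he2 P k N) (pow_nonneg hu0 k))
      (fun N k hk => stp_E_stable _ k N hk)
    exact this.congr fun N => (hexp N u ⟨hu0, hu1.le⟩).symm
  · rw [← Filter.tendsto_add_atTop_iff_nat 1]
    refine (hA.div hz hne).congr' ?_
    have hzpos : ∀ N, 0 < ∏ Q ∈ stpIrrLe Fq N, (1 - (t ^ 2) ^ Q.natDegree) := by
      intro N
      apply Finset.prod_pos
      intro Q hQ
      have hQ' := stp_irrLe_irr N Q hQ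
      have : (t ^ 2) ^ Q.natDegree < 1 :=
        pow_lt_one₀ (by positivity) (pow_lt_one₀ ht0 ht1 (by norm_num)) hQ'.2.natDegree_pos.ne'
      linarith
    filter_upwards with N
    rw [Pi.div_apply, hexp N 1 (by simp), div_eq_iff (hzpos N).ne', stpE, eval_prod, ← Finset.prod_mul_distrib]
    apply Finset.prod_congr rfl
    intro Q _
    rw [stp_delta]
    simp
    ring

open Polynomial Classical

theorem stp_C_zero {Fq : Type*} [Field Fq] [Fintype Fq] (e1 e2 : ℤ) (P : Fq[X]) : stpC e1 e2 P 0 = 1 := by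
  have : stpIrrLe Fq 0 = ∅ := by
    ext Q
    rw [stp_mem_irrLe]
    constructor
    · rintro ⟨_, h, h2⟩
      have := h.natDegree_pos
      omega
    · intro h; simp at h
  rw [stpC, this, stpE]; simp

theorem stp_C_sum {Fq : Type*} [Field Fq] [Fintype Fq] (hodd : Odd (Fintype.card Fq))
    (e1 e2 : ℤ) (he1 : e1 = 1 ∨ e1 = -1) (he2 : e2 = 1 ∨ e2 = -1) (n k : ℕ) (hn : 1 ≤ n) (hk : 1 ≤ k) :
    |∑ P ∈ stpIrr Fq n, stpC e1 e2 P k| ≤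
      25 * k * Real.sqrt ((Fintype.card Fq : ℝ) ^ n) / n * (k + 1) := by
  let h : Fq[X] → ℝ := fun Q =>
    ((e1 : ℝ) ^ Q.natDegree + (e2 : ℝ) ^ Q.natDegree) / ((Fintype.card Fq : ℝ) ^ Q.natDegree + 1)
  set S := stpIrrLe Fq k with hS
  set 𝒯 := S.powerset.filter (fun T => ∑ Q ∈ T, Q.natDegree = k) with hT
  have e : ∑ P ∈ stpIrr Fq n, stpC e1 e2 P k =
      ∑ T ∈ 𝒯, (∏ Q ∈ T, h Q) * ∑ P ∈ stpIrr Fq n, (chiP P (∏ Q ∈ T, Q) : ℝ) := by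
    simp only [Finset.mul_sum]
    rw [Finset.sum_comm]
    apply Finset.sum_congr rfl
    intro P hP
    rw [stp_mem_irr] at hP
    rw [stpC, stp_E_coeff]
    apply Finset.sum_congr rfl
    intro T _
    rw [stp_chi_prod P hP.1 hP.2.1]
    push_cast
    rw [← Finset.prod_mul_distrib]
    apply Finset.prod_congr rfl
    intro Q _
    simp only [h, stpV, aQ]
    push_cast
    ring
  have hv : ∀ Q ∈ S, |(|h Q|)| ≤ 2 * ((Fintype.card Fq : ℝ)⁻¹) ^ Q.natDegree := by
    intro Q _
    have hq : (0 : ℝ) < Fintype.card Fq := by exact_mod_cast Fintype.card_pos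
    rw [abs_abs]
    simp only [h]
    rw [abs_div, abs_of_pos (a := (Fintype.card Fq : ℝ) ^ Q.natDegree + 1) (by positivity), inv_pow, ← div_eq_mul_inv]
    have : |(e1 : ℝ) ^ Q.natDegree + (e2 : ℝ) ^ Q.natDegree| ≤ 2 :=
      (abs_add_le _ _).trans (by linarith [stp_abs_e e1 he1 Q.natDegree, stp_abs_e e2 he2 Q.natDegree])
    gcongr
    linarith
  have h2 := stp_E_two (fun Q => |h Q|) S (stp_irrLe_irr k) hv k
  rw [stp_E_coeff] at h2
  have h3 := (le_abs_self _).trans h2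
  rw [e]
  refine (Finset.abs_sum_le_sum_abs _ _).trans ?_
  have h4 : ∀ T ∈ 𝒯, |(∏ Q ∈ T, h Q) * ∑ P ∈ stpIrr Fq n, (chiP P (∏ Q ∈ T, Q) : ℝ)| ≤
      25 * k * Real.sqrt ((Fintype.card Fq : ℝ) ^ n) / n * ∏ Q ∈ T, |h Q| := by
    intro T hT'
    rw [hT, Finset.mem_filter, Finset.mem_powerset] at hT'
    have hirr : ∀ Q ∈ T, Q.Monic ∧ Irreducible Q := fun Q hQ => stp_irrLe_irr k Q (hT'.1 hQ)
    have hm := stp_prod_mon T hirr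
    rw [stp_mem_mon, hT'.2] at hm
    have := stp_charsum hodd n hn (∏ Q ∈ T, Q) (stp_prod_sqf T hirr) (by rw [hm.2]; exact hk)
    rw [hm.2] at this
    rw [abs_mul, mul_comm, Finset.abs_prod]
    exact mul_le_mul_of_nonneg_right this (Finset.prod_nonneg fun _ _ => abs_nonneg _)
  refine (Finset.sum_le_sum h4).trans ?_
  rw [← Finset.mul_sum]
  exact mul_le_mul_of_nonneg_left h3 (by positivity)

theorem stp_total {Fq : Type*} [Field Fq] [Fintype Fq] (hodd : Odd (Fintype.card Fq)) (R : ℝ) (hR : 1 < R)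
    (hR4 : R ^ 4 = Fintype.card Fq) (e1 e2 : ℤ) (he1 : e1 = 1 ∨ e1 = -1)
    (he2 : e2 = 1 ∨ e2 = -1) (n : ℕ) (hn : 1 ≤ n) :
    |∑ P ∈ stpIrr Fq n, (∑' k, stpC e1 e2 P k) - (stpIrr Fq n).card| ≤
      (1600 + Real.exp (9 * (1 - (R ^ 2)⁻¹)⁻¹) * (1 - R⁻¹)⁻¹) * ((n : ℝ) ^ 2 * R ^ (2 * n)) := by
  have hR0 : 0 < R := by linarith
  have hn' : (1 : ℝ) ≤ n := by exact_mod_cast hn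
  set B := Real.exp (9 * (1 - (R ^ 2)⁻¹)⁻¹) with hB
  have hB0 : 0 < B := Real.exp_pos _
  have hsqrt : Real.sqrt ((Fintype.card Fq : ℝ) ^ n) = R ^ (2 * n) := by
    rw [← hR4, show (R ^ 4) ^ n = (R ^ (2 * n)) ^ 2 by ring, Real.sqrt_sq (by positivity)]
  have hsum : ∀ P ∈ stpIrr Fq n, Summable (stpC e1 e2 P) := by
    intro P hP
    rw [stp_mem_irr] at hP
    exact (stp_C_summable hodd R hR hR4 e1 e2 he1 he2 P hP.1 hP.2.1).of_abs
  have e1' : ∑ P ∈ stpIrr Fq n, (∑' k, stpC e1 e2 P k) - (stpIrr Fq n).card =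
      ∑ k ∈ Finset.Ico 1 (4 * n), (∑ P ∈ stpIrr Fq n, stpC e1 e2 P k) +
      ∑ P ∈ stpIrr Fq n, ∑' k, stpC e1 e2 P (k + 4 * n) := by
    rw [Finset.sum_comm, ← Finset.sum_add_distrib, Finset.card_eq_sum_ones]
    push_cast
    rw [← Finset.sum_sub_distrib]
    apply Finset.sum_congr rfl
    intro P hP
    rw [← (hsum P hP).sum_add_tsum_nat_add (4 * n), Finset.range_eq_Ico,
      Finset.sum_eq_sum_Ico_succ_bot (by omega), stp_C_zero]
    ring
  rw [e1']
  have b1 : |∑ k ∈ Finset.Ico 1 (4 * n), (∑ P ∈ stpIrr Fq n, stpC e1 e2 P k)| ≤ 1600 * ((n : ℝ) ^ 2 * R ^ (2 * n)) := by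
    refine (Finset.abs_sum_le_sum_abs _ _).trans ?_
    have : ∀ k ∈ Finset.Ico 1 (4 * n), |∑ P ∈ stpIrr Fq n, stpC e1 e2 P k| ≤ 400 * (n * R ^ (2 * n)) := by
      intro k hk
      rw [Finset.mem_Ico] at hk
      have h1 := stp_C_sum hodd e1 e2 he1 he2 n k hn hk.1
      rw [hsqrt] at h1
      refine h1.trans ?_
      have hk1 : (k : ℝ) ≤ 4 * n := by exact_mod_cast hk.2.le
      have hk2 : (k : ℝ) + 1 ≤ 4 * n := by exact_mod_cast hk.2
      calc 25 * (k : ℝ) * R ^ (2 * n) / n * (k + 1) ≤ 25 * (4 * n) * R ^ (2 * n) / n * (4 * n) := by gcongr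
        _ = 400 * (n * R ^ (2 * n)) := by field_simp; ring
    refine (Finset.sum_le_sum this).trans ?_
    rw [Finset.sum_const, Nat.card_Ico, nsmul_eq_mul]
    have h3 : ((4 * n - 1 : ℕ) : ℝ) ≤ 4 * n := by
      have : 4 * n - 1 ≤ 4 * n := by omega
      exact_mod_cast this
    calc _ ≤ (4 * n : ℝ) * (400 * (n * R ^ (2 * n))) := by gcongr
      _ = _ := by ring
  have b2 : |∑ P ∈ stpIrr Fq n, ∑' k, stpC e1 e2 P (k + 4 * n)| ≤ B * (1 - R⁻¹)⁻¹ * ((n : ℝ) ^ 2 * R ^ (2 * n)) := by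
    refine (Finset.abs_sum_le_sum_abs _ _).trans ?_
    have hg0 : 0 ≤ R⁻¹ := by positivity
    have hg1 : R⁻¹ < 1 := inv_lt_one_of_one_lt₀ hR
    have : ∀ P ∈ stpIrr Fq n, |∑' k, stpC e1 e2 P (k + 4 * n)| ≤ B * n ^ 2 * (R ^ (2 * n))⁻¹ * (1 - R⁻¹)⁻¹ := by
      intro P hP
      have hP' := (stp_mem_irr n P).mp hP
      rw [← tsum_geometric_of_lt_one hg0 hg1, ← tsum_mul_left, ← Real.norm_eq_abs]
      apply tsum_of_norm_bounded ((summable_geometric_of_lt_one hg0 hg1).mul_left _).hasSum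
      intro k
      have h1 := stp_tail hodd R hR hR4 e1 e2 he1 he2 P hP'.1 hP'.2.1 (k + 4 * n)
      rw [hP'.2.2, ← le_div_iff₀ (by positivity)] at h1
      rw [Real.norm_eq_abs]
      refine h1.trans_eq ?_
      rw [hB, inv_pow]
      field_simp
      ring
    refine (Finset.sum_le_sum this).trans ?_
    rw [Finset.sum_const, nsmul_eq_mul]
    have h3 : ((stpIrr Fq n).card : ℝ) ≤ R ^ (4 * n) := by
      rw [pow_mul, hR4]; exact_mod_cast stp_card_irr_le n
    have h4 : 0 < (1 - R⁻¹)⁻¹ := inv_pos.mpr (by linarith)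
    calc _ ≤ R ^ (4 * n) * (B * n ^ 2 * (R ^ (2 * n))⁻¹ * (1 - R⁻¹)⁻¹) := by gcongr
      _ = B * (1 - R⁻¹)⁻¹ * (n ^ 2 * (R ^ (4 * n) * (R ^ (2 * n))⁻¹)) := by ring
      _ = _ := by
        congr 2
        rw [show 4 * n = 2 * n + 2 * n by ring, pow_add]
        field_simp
  refine (abs_add_le _ _).trans ((add_le_add b1 b2).trans_eq ?_)
  ring

theorem stp_compare (R : ℝ) (hR : 1 < R) : ∃ K : ℝ, 0 < K ∧ ∀ n M : ℕ, 1 ≤ n → 1 ≤ M →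
    (n : ℝ) ^ 2 * R ^ (2 * n) ≤ K * (R ^ (2 * n) * (M : ℝ) ^ 3 / n + R ^ (4 * n) / (n * M * R ^ (2 * M))) := by
  have hR0 : 0 < R := by linarith
  obtain ⟨K, hK⟩ := (tendsto_pow_const_div_const_pow_of_one_lt 4 hR).bddAbove_range
  refine ⟨max K 8, by positivity, ?_⟩
  intro n M hn hM
  have hn' : (1 : ℝ) ≤ n := by exact_mod_cast hn
  have hM' : (1 : ℝ) ≤ M := by exact_mod_cast hM
  have t2 : 0 ≤ R ^ (2 * n) * (M : ℝ) ^ 3 / n := by positivity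
  have t3 : 0 ≤ R ^ (4 * n) / (n * M * R ^ (2 * M)) := by positivity
  by_cases h : n ≤ 2 * M
  · have h1 : (n : ℝ) ≤ 2 * M := by exact_mod_cast h
    have h2 : (n : ℝ) ^ 3 ≤ (2 * M) ^ 3 := by gcongr
    have h3 : (n : ℝ) ^ 2 * R ^ (2 * n) ≤ 8 * (R ^ (2 * n) * (M : ℝ) ^ 3 / n) := by
      rw [← mul_div_assoc, le_div_iff₀ (by linarith)]
      calc _ = R ^ (2 * n) * (n : ℝ) ^ 3 := by ring
        _ ≤ R ^ (2 * n) * (2 * M) ^ 3 := by gcongr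
        _ = _ := by ring
    calc _ ≤ 8 * (R ^ (2 * n) * (M : ℝ) ^ 3 / n) := h3
      _ ≤ max K 8 * (R ^ (2 * n) * (M : ℝ) ^ 3 / n + R ^ (4 * n) / (n * M * R ^ (2 * M))) := by
        gcongr
        · exact le_max_right _ _
        · linarith
  · have hle : 2 * M ≤ n := by omega
    have h1 : (M : ℝ) ≤ n := by exact_mod_cast (by omega : M ≤ n)
    have hk : (n : ℝ) ^ 4 / R ^ n ≤ K := hK ⟨n, rfl⟩
    rw [div_le_iff₀ (by positivity)] at hk
    have hK0 : 0 ≤ K := by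
      by_contra hneg
      push Not at hneg
      have : (0 : ℝ) ≤ (n : ℝ) ^ 4 := by positivity
      nlinarith [pow_pos hR0 n]
    have h3 : (n : ℝ) ^ 2 * R ^ (2 * n) ≤ K * (R ^ (4 * n) / (n * n * R ^ n)) := by
      rw [← mul_div_assoc, le_div_iff₀ (by positivity)]
      calc _ = (n : ℝ) ^ 4 * R ^ (3 * n) := by ring
        _ ≤ (K * R ^ n) * R ^ (3 * n) := by gcongr
        _ = _ := by ring
    have h4 : R ^ (2 * M) ≤ R ^ n := pow_le_pow_right₀ hR.le hle
    calc _ ≤ K * (R ^ (4 * n) / (n * n * R ^ n)) := h3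
      _ ≤ K * (R ^ (4 * n) / (n * M * R ^ (2 * M))) := by gcongr
      _ ≤ max K 8 * (R ^ (2 * n) * (M : ℝ) ^ 3 / n + R ^ (4 * n) / (n * M * R ^ (2 * M))) := by
        gcongr
        · exact le_max_left _ _
        · linarith

/-- if `A_P` denotes the limit of the partial products
`∏_{deg Q ≤ M} (1 + δ_P(Q))`, then there is a constant `C` depending only on `q` such
that for all `n, M ≥ 1`,
`|∑_{deg P = n} A_P - π_q(n)·(1 - 1/q)| ≤ C·(q^{n-2M}/n + q^{n/2}·M³/n + q^n/(n·M·q^{M/2}))`. -/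
theorem stmt12 (q : ℕ) (hq_odd : Odd q) (hq_pp : IsPrimePow q)
    (e1 e2 : ℤ) (he1 : e1 = 1 ∨ e1 = -1) (he2 : e2 = 1 ∨ e2 = -1)
    (Fq : Type) [Field Fq] [Fintype Fq] (hFq : Fintype.card Fq = q)
    (A : Fq[X] → ℝ)
    (hA : ∀ P : Fq[X], P.Monic → Irreducible P →
      Filter.Tendsto
        (fun M : ℕ => ∏ᶠ Q ∈ {Q : Fq[X] | Q.Monic ∧ Irreducible Q ∧ Q.natDegree ≤ M},
          (1 + deltaP q e1 e2 P Q))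
        Filter.atTop (nhds (A P))) :
    ∃ C : ℝ, ∀ n M : ℕ, 1 ≤ n → 1 ≤ M →
      |(∑ᶠ P ∈ {P : Fq[X] | P.Monic ∧ Irreducible P ∧ P.natDegree = n}, A P) -
          (piq Fq n : ℝ) * (1 - 1 / (q : ℝ))| ≤
        C * ((q : ℝ) ^ ((n : ℝ) - 2 * (M : ℝ)) / (n : ℝ) +
          (q : ℝ) ^ ((n : ℝ) / 2) * (M : ℝ) ^ 3 / (n : ℝ) +
          (q : ℝ) ^ (n : ℝ) / ((n : ℝ) * (M : ℝ) * (q : ℝ) ^ ((M : ℝ) / 2))) := by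
  subst hFq
  set q := Fintype.card Fq with hqdef
  have hq1 : (1 : ℝ) < q := by exact_mod_cast Fintype.one_lt_card
  have hq0 : (0 : ℝ) < q := by linarith
  set R : ℝ := (q : ℝ) ^ (1 / 4 : ℝ) with hRdef
  have hR : 1 < R := Real.one_lt_rpow hq1 (by norm_num)
  have hRpow : ∀ k : ℕ, R ^ k = (q : ℝ) ^ ((k : ℝ) / 4) := by
    intro k
    rw [hRdef, ← Real.rpow_natCast, ← Real.rpow_mul hq0.le]
    congr 1; ring
  have hR4 : R ^ 4 = q := by rw [hRpow]; norm_num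
  obtain ⟨K, hK0, hK⟩ := stp_compare R hR
  set B := (1600 + Real.exp (9 * (1 - (R ^ 2)⁻¹)⁻¹) * (1 - R⁻¹)⁻¹) with hB
  have hB0 : 0 ≤ B := by
    have h1 : 0 < (1 - R⁻¹)⁻¹ := inv_pos.mpr (by linarith [inv_lt_one_of_one_lt₀ hR])
    positivity
  refine ⟨B * K, ?_⟩
  intro n M hn hM
  have hset : {P : Fq[X] | P.Monic ∧ Irreducible P ∧ P.natDegree = n} = ↑(stpIrr Fq n) := by
    ext P; simp [stp_mem_irr]
  have hpi : piq Fq n = (stpIrr Fq n).card := by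
    rw [piq, hset, Set.ncard_coe_finset]
  rw [hpi, hset, finsum_mem_coe_finset]
  have hAP : ∀ P ∈ stpIrr Fq n, A P = (1 - (q : ℝ)⁻¹) * ∑' k, stpC e1 e2 P k := by
    intro P hP
    have hP' := (stp_mem_irr n P).mp hP
    apply stp_AP hq_odd R hR hR4 e1 e2 he1 he2 P hP'.1 hP'.2.1
    refine (hA P hP'.1 hP'.2.1).congr fun M => ?_
    have hset2 : {Q : Fq[X] | Q.Monic ∧ Irreducible Q ∧ Q.natDegree ≤ M} = ↑(stpIrrLe Fq M) := by
      ext Q; simp [stp_mem_irrLe]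
    rw [hset2, finprod_mem_coe_finset]
  rw [Finset.sum_congr rfl hAP, ← Finset.mul_sum]
  have h1 := stp_total hq_odd R hR hR4 e1 e2 he1 he2 n hn
  have hn' : (1 : ℝ) ≤ n := by exact_mod_cast hn
  have hM' : (1 : ℝ) ≤ M := by exact_mod_cast hM
  have e : (1 - (q : ℝ)⁻¹) * ∑ P ∈ stpIrr Fq n, (∑' k, stpC e1 e2 P k) - (stpIrr Fq n).card * (1 - 1 / (q : ℝ)) =
      (1 - (q : ℝ)⁻¹) * (∑ P ∈ stpIrr Fq n, (∑' k, stpC e1 e2 P k) - (stpIrr Fq n).card) := by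
    rw [one_div]; ring
  rw [e, abs_mul]
  have ht : |1 - (q : ℝ)⁻¹| ≤ 1 := by
    have := inv_lt_one_of_one_lt₀ hq1
    have : 0 < (q : ℝ)⁻¹ := by positivity
    rw [abs_le]; constructor <;> linarith
  have r1 : (q : ℝ) ^ ((n : ℝ) / 2) = R ^ (2 * n) := by
    rw [hRpow]; congr 1; push_cast; ring
  have r2 : (q : ℝ) ^ (n : ℝ) = R ^ (4 * n) := by
    rw [hRpow]; congr 1; push_cast; ring
  have r3 : (q : ℝ) ^ ((M : ℝ) / 2) = R ^ (2 * M) := by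
    rw [hRpow]; congr 1; push_cast; ring
  rw [r1, r2, r3]
  calc _ ≤ 1 * (B * ((n : ℝ) ^ 2 * R ^ (2 * n))) := by
        exact mul_le_mul ht h1 (abs_nonneg _) zero_le_one
    _ ≤ B * (K * (R ^ (2 * n) * (M : ℝ) ^ 3 / n + R ^ (4 * n) / (n * M * R ^ (2 * M)))) := by
        rw [one_mul]
        exact mul_le_mul_of_nonneg_left (hK n M hn hM) hB0
    _ ≤ _ := by
        rw [← mul_assoc]
        apply mul_le_mul_of_nonneg_left _ (by positivity)
        have : 0 ≤ (q : ℝ) ^ ((n : ℝ) - 2 * (M : ℝ)) / (n : ℝ) := by positivity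
        linarith
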